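/- Let T > 0, c₁ > c₀ > 0 and M₀ ∈ ℕ. For each ε ∈ (0,1] let c_ε ∈ C^∞([0,1]) be real with c₀ ≤ c_ε(x) ≤ c₁, and b_ε ∈ C^∞([0,1]×[0,T]) real such that ‖b_ε‖_{L^∞(X_T)} ≤ log(r_ε) for small ε, where (r_ε) is a slow scale net with r_ε ≥ 1; assume that for every k the net (‖∂_x^k c_ε‖_{L^∞}) is of slow scale and for all l,k the net (‖∂_t^l ∂_x^k b_ε‖_{L^∞(X_T)}) is of slow scale. Let f_{1,ε}, f_{2,ε} ∈ C_c^∞((0,1)) and g_ε ∈ C^∞([0,1]×[0,T]) be families such that for ALL k,l: ‖∂_x^k f_{1,ε}‖²_{L²((0,1))} + ‖∂_x^k f_{2,ε}‖²_{L²((0,1))} + ‖∂_t^l ∂_x^k g_ε‖²_{L²(X_T)} = O(ε^{-M₀}) as ε → 0 (with M₀ independent of k,l). Then the unique smooth solutions u_ε of ∂_t²u_ε + ∂_x²(c_ε ∂_x²u_ε) + b_ε ∂_x²u_ε = g_ε with u_ε(·,0) = f_{1,ε}, ∂_t u_ε(·,0) = f_{2,ε} and clamped boundary conditions satisfy the uniform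 moderateness estimate: for all l,k ∈ ℕ, ‖∂_t^l ∂_x^k u_ε‖_{L²(X_T)} = O(ε^{-M₀-1}) as ε → 0. -/

import Mathlib

open MeasureTheory Filter Topology Asymptotics

noncomputable section

/-- A test function on `(0,1)`: smooth, compactly supported, with support inside `(0,1)`. -/
def IsTestFun (φ : ℝ → ℂ) : Prop :=
  ContDiff ℝ (⊤ : ℕ∞) φ ∧ HasCompactSupport φ ∧ tsupport φ ⊆ Set.Ioo 0 1

/-- Partial derivative with respect to the first (space) variable. -/
def Dx (v : ℝ → ℝ → ℂ) : ℝ → ℝ → ℂ := fun x t => deriv (fun y => v y t) x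

/-- Partial derivative with respect to the second (time) variable. -/
def Dt (v : ℝ → ℝ → ℂ) : ℝ → ℝ → ℂ := fun x t => deriv (fun s => v x s) t

/-- Iterated partial derivative `∂ₓᵏ ∂ₜˡ v`, for `v = v x t` a function of the space
variable `x` (first) and the time variable `t` (second). -/
def PD {F : Type*} [NormedAddCommGroup F] [NormedSpace ℝ F] (k l : ℕ)
    (v : ℝ → ℝ → F) : ℝ → ℝ → F :=
  fun x t => iteratedDeriv k (fun y => iteratedDeriv l (fun s => v y s) t) x

/-- `u` (smooth, as a function on `ℝ²`; its restriction to `[0,1]×[0,T]` is what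
matters) is a classical solution of the Euler–Bernoulli initial-boundary value
problem `∂ₜ²u + ∂ₓ²(c ∂ₓ²u) + b ∂ₓ²u = g` on `[0,1]×[0,T]`, `u(·,0) = f₁`,
`∂ₜu(·,0) = f₂`, with clamped boundary conditions
`u(0,t) = u(1,t) = ∂ₓu(0,t) = ∂ₓu(1,t) = 0`. -/
def IsClassicalSol (T : ℝ) (c : ℝ → ℝ) (b : ℝ → ℝ → ℝ) (f₁ f₂ : ℝ → ℂ)
    (g : ℝ → ℝ → ℂ) (u : ℝ → ℝ → ℂ) : Prop :=
  ContDiff ℝ (⊤ : ℕ∞) (Function.uncurry u) ∧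
  (∀ x ∈ Set.Icc (0:ℝ) 1, ∀ t ∈ Set.Icc (0:ℝ) T,
    Dt (Dt u) x t + Dx (Dx (fun y s => (c y : ℂ) * Dx (Dx u) y s)) x t
      + (b x t : ℂ) * Dx (Dx u) x t = g x t) ∧
  (∀ x ∈ Set.Icc (0:ℝ) 1, u x 0 = f₁ x ∧ Dt u x 0 = f₂ x) ∧
  (∀ t ∈ Set.Icc (0:ℝ) T, u 0 t = 0 ∧ u 1 t = 0 ∧ Dx u 0 t = 0 ∧ Dx u 1 t = 0)

/-- A net `(r_ε)_{ε ∈ (0,1]}` of (nonnegative real) numbers is of slow scale if for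
every `p ∈ ℕ` one has `|r_ε|^p = O(ε⁻¹)` as `ε → 0`. -/
def SlowScaleNet (r : ℝ → ℝ) : Prop :=
  ∀ p : ℕ, (fun ε => |r ε| ^ p) =O[𝓝[>] (0:ℝ)] fun ε => ε⁻¹

/-!
The energy `‖∂ₜu‖² + ∫ c |∂ₓ²u|²` obeys a Grönwall inequality whose rate is affine in `‖b‖_∞`.
As `‖b_ε‖_∞ ≤ log r_ε`, the resulting exponential is at most a constant times a power of `r_ε`, so
it is again of slow scale. A time derivative `∂ₜˡu` is still clamped and solves the same equation up
to the commutator `[∂ₜˡ, b] ∂ₓ²u`, which only involves `∂ₜ^q ∂ₓ²u` with `q < l`; induction on `l`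
bounds every `∂ₜˡ∂ₓ²u` and `∂ₜˡu`, the initial values of the time derivatives being read off from
the equation at `t = 0`. Poincaré's inequality recovers `∂ₓu`, and the equation, solved for
`∂ₓ²(c ∂ₓ²u)`, yields the derivatives `∂ₓᵏu` with `k ≥ 4`. The missing case `k = 3` follows by
interpolating `∂ₓ(c ∂ₓ²u)` between `c ∂ₓ²u` and `∂ₓ²(c ∂ₓ²u)`. Since the data bounds hold for all
time derivatives of `g`, the one-dimensional Sobolev inequality makes them uniform in time. Each
step costs only a slow scale factor, and any finite product of those is `O(ε⁻¹)`.
-/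

/-! ### Partial derivatives -/

section PartialDerivatives

variable {F : Type*} [NormedAddCommGroup F] [NormedSpace ℝ F]
variable {a v w : ℝ → ℝ → F} {f : ℝ → ℝ → ℝ}

/-- Smoothness on `ℝ²` of a function given in curried form. -/
abbrev IsSmooth (v : ℝ → ℝ → F) : Prop :=
  ContDiff ℝ (⊤ : ℕ∞) (Function.uncurry v)

/-- A function of the space variable alone, regarded as a function of space and time. -/
def spatial (c : ℝ → F) : ℝ → ℝ → F := fun x _ => c x

theorem PD_zero_zero (v : ℝ → ℝ → F) : PD 0 0 v = v := by
  funext x t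
  simp [PD]

theorem PD_one_zero_apply (v : ℝ → ℝ → F) (x t : ℝ) :
    PD 1 0 v x t = deriv (fun y => v y t) x := by
  simp [PD]

theorem PD_zero_one_apply (v : ℝ → ℝ → F) (x t : ℝ) : PD 0 1 v x t = deriv (v x) t := by
  simp [PD]

theorem PD_one_zero_PD (k l : ℕ) (v : ℝ → ℝ → F) : PD 1 0 (PD k l v) = PD (k + 1) l v := by
  funext x t
  rw [PD_one_zero_apply]
  exact (congrFun iteratedDeriv_succ x).symm

theorem PD_PD_zero_one (k l : ℕ) (v : ℝ → ℝ → F) : PD k l (PD 0 1 v) = PD k (l + 1) v := by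
  have key (y t : ℝ) : iteratedDeriv l (PD 0 1 v y) t = iteratedDeriv (l + 1) (v y) t := by
    rw [iteratedDeriv_succ', show PD 0 1 v y = deriv (v y) from funext (PD_zero_one_apply v y)]
  funext x t
  exact congrArg (iteratedDeriv k · x) (funext fun y => key y t)

theorem PD_zero_spatial (c : ℝ → F) (k : ℕ) (x t : ℝ) :
    PD k 0 (spatial c) x t = iteratedDeriv k c x := by
  simp [PD, spatial]

theorem PD_succ_spatial (c : ℝ → F) (k l : ℕ) (x t : ℝ) : PD k (l + 1) (spatial c) x t = 0 := by
  simp [PD, spatial, iteratedDeriv_const]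

theorem PD_zero_spatial_smul (c : ℝ → ℝ) (a : ℝ → ℝ → F) (l : ℕ) :
    PD 0 l (spatial c • a) = spatial c • PD 0 l a := by
  funext x t
  simp [PD, spatial]

theorem iteratedDeriv_eqOn_of_isOpen {φ ψ : ℝ → F} {U : Set ℝ} (hU : IsOpen U)
    (h : Set.EqOn φ ψ U) (k : ℕ) : Set.EqOn (iteratedDeriv k φ) (iteratedDeriv k ψ) U := by
  intro x hx
  rw [← iteratedDerivWithin_of_isOpen hU hx, ← iteratedDerivWithin_of_isOpen hU hx]
  exact iteratedDerivWithin_congr h hx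

theorem PD_eq_of_isOpen {U V : Set ℝ} (hU : IsOpen U) (hV : IsOpen V)
    (h : ∀ x ∈ U, ∀ t ∈ V, v x t = w x t) (k l : ℕ) :
    ∀ x ∈ U, ∀ t ∈ V, PD k l v x t = PD k l w x t := fun _ hx _ ht =>
  iteratedDeriv_eqOn_of_isOpen hU
    (fun y hy => iteratedDeriv_eqOn_of_isOpen hV (fun s hs => h y hy s hs) l ht) k hx

theorem IsSmooth.hasDerivAt_space_fderiv (hv : IsSmooth v) (x t : ℝ) :
    HasDerivAt (fun y => v y t) (fderiv ℝ (Function.uncurry v) (x, t) (1, 0)) x :=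
  (hv.differentiable (by simp) (x, t)).hasFDerivAt.comp_hasDerivAt (f := (·, t)) x
    ((hasDerivAt_id x).prodMk (hasDerivAt_const x t))

theorem IsSmooth.hasDerivAt_time_fderiv (hv : IsSmooth v) (x t : ℝ) :
    HasDerivAt (v x) (fderiv ℝ (Function.uncurry v) (x, t) (0, 1)) t :=
  (hv.differentiable (by simp) (x, t)).hasFDerivAt.comp_hasDerivAt (f := (x, ·)) t
    ((hasDerivAt_const t x).prodMk (hasDerivAt_id t))

theorem IsSmooth.uncurry_PD_one_zero (hv : IsSmooth v) :
    Function.uncurry (PD 1 0 v) = fun p => fderiv ℝ (Function.uncurry v) p (1, 0) := by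
  funext ⟨x, t⟩
  exact (PD_one_zero_apply v x t).trans (hv.hasDerivAt_space_fderiv x t).deriv

theorem IsSmooth.uncurry_PD_zero_one (hv : IsSmooth v) :
    Function.uncurry (PD 0 1 v) = fun p => fderiv ℝ (Function.uncurry v) p (0, 1) := by
  funext ⟨x, t⟩
  exact (PD_zero_one_apply v x t).trans (hv.hasDerivAt_time_fderiv x t).deriv

theorem IsSmooth.contDiff_fderiv (hv : IsSmooth v) :
    ContDiff ℝ (⊤ : ℕ∞) (fderiv ℝ (Function.uncurry v)) :=
  ContDiff.fderiv_right hv (by simp)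

theorem IsSmooth.pd (hv : IsSmooth v) (k l : ℕ) : IsSmooth (PD k l v) := by
  induction k with
  | succ k ih =>
    rw [← PD_one_zero_PD, IsSmooth, ih.uncurry_PD_one_zero]
    exact ih.contDiff_fderiv.clm_apply contDiff_const
  | zero =>
    induction l generalizing v with
    | zero => rwa [PD_zero_zero]
    | succ l ih =>
      rw [← PD_PD_zero_one]
      refine ih ?_
      rw [IsSmooth, hv.uncurry_PD_zero_one]
      exact hv.contDiff_fderiv.clm_apply contDiff_const

theorem IsSmooth.PD_zero_one_PD_one_zero (hv : IsSmooth v) :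
    PD 0 1 (PD 1 0 v) = PD 1 0 (PD 0 1 v) := by
  funext x t
  have hsecond : HasFDerivAt (fderiv ℝ (Function.uncurry v))
      (fderiv ℝ (fderiv ℝ (Function.uncurry v)) (x, t)) (x, t) :=
    (hv.contDiff_fderiv.differentiable (by simp) _).hasFDerivAt
  have htx : PD 0 1 (PD 1 0 v) x t
      = fderiv ℝ (fderiv ℝ (Function.uncurry v)) (x, t) (0, 1) (1, 0) := by
    rw [PD_zero_one_apply, ((hv.pd 1 0).hasDerivAt_time_fderiv x t).deriv,
      hv.uncurry_PD_one_zero, (hsecond.clm_apply (hasFDerivAt_const _ _)).fderiv]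
    simp
  have hxt : PD 1 0 (PD 0 1 v) x t
      = fderiv ℝ (fderiv ℝ (Function.uncurry v)) (x, t) (1, 0) (0, 1) := by
    rw [PD_one_zero_apply, ((hv.pd 0 1).hasDerivAt_space_fderiv x t).deriv,
      hv.uncurry_PD_zero_one, (hsecond.clm_apply (hasFDerivAt_const _ _)).fderiv]
    simp
  have hsymm : IsSymmSndFDerivAt ℝ (Function.uncurry v) (x, t) :=
    hv.contDiffAt.isSymmSndFDerivAt (by simpa using WithTop.coe_le_coe.2 (le_top (a := (2 : ℕ∞))))
  rw [htx, hxt, hsymm]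

theorem IsSmooth.PD_zero_one_PD (hv : IsSmooth v) (k l : ℕ) :
    PD 0 1 (PD k l v) = PD k (l + 1) v := by
  induction k with
  | succ k ih =>
    rw [← PD_one_zero_PD, (hv.pd k l).PD_zero_one_PD_one_zero, ih, PD_one_zero_PD]
  | zero =>
    induction l generalizing v with
    | zero => rw [PD_zero_zero]
    | succ l ih => rw [← PD_PD_zero_one 0 l, ih (hv.pd 0 1), PD_PD_zero_one]

theorem IsSmooth.PD_PD (hv : IsSmooth v) (k l i j : ℕ) :
    PD k l (PD i j v) = PD (i + k) (j + l) v := by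
  induction k with
  | succ k ih => rw [← PD_one_zero_PD, ih, PD_one_zero_PD, add_assoc]
  | zero =>
    induction l generalizing j with
    | zero => rw [PD_zero_zero, add_zero, add_zero]
    | succ l ih => rw [← PD_PD_zero_one, hv.PD_zero_one_PD, ih, add_assoc, add_comm 1]

theorem IsSmooth.hasDerivAt_space (hv : IsSmooth v) (k l : ℕ) (x t : ℝ) :
    HasDerivAt (fun y => PD k l v y t) (PD (k + 1) l v x t) x := by
  rw [← PD_one_zero_PD, PD_one_zero_apply]
  exact ((hv.pd k l).hasDerivAt_space_fderiv x t).differentiableAt.hasDerivAt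

theorem IsSmooth.hasDerivAt_time (hv : IsSmooth v) (k l : ℕ) (x t : ℝ) :
    HasDerivAt (PD k l v x) (PD k (l + 1) v x t) t := by
  rw [← hv.PD_zero_one_PD, PD_zero_one_apply]
  exact ((hv.pd k l).hasDerivAt_time_fderiv x t).differentiableAt.hasDerivAt

theorem IsSmooth.contDiff_space (hv : IsSmooth v) (t : ℝ) :
    ContDiff ℝ (⊤ : ℕ∞) (fun x => v x t) :=
  hv.comp (contDiff_id.prodMk contDiff_const)

theorem IsSmooth.contDiff_time (hv : IsSmooth v) (x : ℝ) : ContDiff ℝ (⊤ : ℕ∞) (v x) :=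
  hv.comp (contDiff_const.prodMk contDiff_id)

theorem IsSmooth.continuous_space (hv : IsSmooth v) (t : ℝ) : Continuous (fun x => v x t) :=
  (hv.contDiff_space t).continuous

theorem isSmooth_spatial {c : ℝ → F} (hc : ContDiff ℝ (⊤ : ℕ∞) c) : IsSmooth (spatial c) :=
  hc.comp contDiff_fst

theorem IsSmooth.add (hv : IsSmooth v) (hw : IsSmooth w) : IsSmooth (v + w) :=
  ContDiff.add hv hw

theorem IsSmooth.smul (hf : IsSmooth f) (ha : IsSmooth a) : IsSmooth (f • a) :=
  ContDiff.smul hf ha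

theorem IsSmooth.PD_add (hv : IsSmooth v) (hw : IsSmooth w) (k l : ℕ) :
    PD k l (v + w) = PD k l v + PD k l w := by
  have htime (y t : ℝ) : iteratedDeriv l (v y + w y) t
      = iteratedDeriv l (v y) t + iteratedDeriv l (w y) t :=
    iteratedDeriv_add (contDiff_infty.1 (hv.contDiff_time y) l).contDiffAt
      (contDiff_infty.1 (hw.contDiff_time y) l).contDiffAt
  funext x t
  exact (congrArg (iteratedDeriv k · x) (funext fun y => htime y t)).trans <|
    iteratedDeriv_add (contDiff_infty.1 ((hv.pd 0 l).contDiff_space t) k).contDiffAt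
      (contDiff_infty.1 ((hw.pd 0 l).contDiff_space t) k).contDiffAt

theorem IsSmooth.PD_one_zero_smul (hf : IsSmooth f) (ha : IsSmooth a) :
    PD 1 0 (f • a) = PD 1 0 f • a + f • PD 1 0 a := by
  funext x t
  have hderiv := (hf.hasDerivAt_space 0 0 x t).smul (ha.hasDerivAt_space 0 0 x t)
  simp only [PD_zero_zero, zero_add] at hderiv
  exact (PD_one_zero_apply _ x t).trans (hderiv.deriv.trans (add_comm _ _))

theorem IsSmooth.PD_zero_one_smul (hf : IsSmooth f) (ha : IsSmooth a) :
    PD 0 1 (f • a) = PD 0 1 f • a + f • PD 0 1 a := by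
  funext x t
  have hderiv := (hf.hasDerivAt_time 0 0 x t).smul (ha.hasDerivAt_time 0 0 x t)
  simp only [PD_zero_zero, zero_add] at hderiv
  exact (PD_zero_one_apply _ x t).trans (hderiv.deriv.trans (add_comm _ _))

end PartialDerivatives

/-! ### Integral inequalities on an interval -/

section IntervalInequalities

variable {F : Type*} [NormedAddCommGroup F]

theorem sq_integral_norm_le_integral_norm_sq {φ : ℝ → F} (hφ : Continuous φ) :
    (∫ x in (0 : ℝ)..1, ‖φ x‖) ^ 2 ≤ ∫ x in (0 : ℝ)..1, ‖φ x‖ ^ 2 := by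
  set m := ∫ x in (0 : ℝ)..1, ‖φ x‖ with hm
  have hvariance : 0 ≤ ∫ x in (0 : ℝ)..1, (‖φ x‖ ^ 2 - 2 * m * ‖φ x‖ + m ^ 2) :=
    intervalIntegral.integral_nonneg zero_le_one fun x _ => by nlinarith [sq_nonneg (‖φ x‖ - m)]
  rw [intervalIntegral.integral_add, intervalIntegral.integral_sub,
    intervalIntegral.integral_const_mul, intervalIntegral.integral_const, ← hm, sub_zero,
    one_smul] at hvariance
  · linarith
  all_goals exact Continuous.intervalIntegrable (by fun_prop) _ _

variable [NormedSpace ℝ F] [CompleteSpace F] {φ φ' φ'' : ℝ → F} {a b x y : ℝ}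

theorem norm_sub_le_integral_norm_deriv (hφ : ∀ z, HasDerivAt φ (φ' z) z) (hφ' : Continuous φ')
    (hx : x ∈ Set.Icc a b) (hy : y ∈ Set.Icc a b) : ‖φ x - φ y‖ ≤ ∫ z in a..b, ‖φ' z‖ := by
  have hab : a ≤ b := hx.1.trans hx.2
  calc ‖φ x - φ y‖ = ‖∫ z in y..x, φ' z‖ := by
        rw [intervalIntegral.integral_eq_sub_of_hasDerivAt (fun z _ => hφ z)
          (hφ'.intervalIntegrable _ _)]
    _ ≤ |∫ z in y..x, ‖φ' z‖| := intervalIntegral.norm_integral_le_abs_integral_norm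
    _ ≤ |∫ z in a..b, ‖φ' z‖| := by
        refine intervalIntegral.abs_integral_mono_interval ?_
          (Eventually.of_forall fun z => norm_nonneg _) (hφ'.norm.intervalIntegrable _ _)
        rw [Set.uIoc_of_le hab]
        exact Set.Ioc_subset_Ioc (le_min hy.1 hx.1) (max_le hy.2 hx.2)
    _ = ∫ z in a..b, ‖φ' z‖ :=
        abs_of_nonneg (intervalIntegral.integral_nonneg hab fun z _ => norm_nonneg _)

theorem length_mul_norm_le_integral (hφ : ∀ z, HasDerivAt φ (φ' z) z) (hφ' : Continuous φ')
    (hx : x ∈ Set.Icc a b) :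
    (b - a) * ‖φ x‖ ≤ (∫ z in a..b, ‖φ z‖) + (b - a) * ∫ z in a..b, ‖φ' z‖ := by
  have hcont : Continuous φ := continuous_iff_continuousAt.2 fun z => (hφ z).continuousAt
  have hpointwise : ∀ z ∈ Set.Icc a b, ‖φ x‖ - ∫ s in a..b, ‖φ' s‖ ≤ ‖φ z‖ := fun z hz => by
    linarith [norm_sub_norm_le (φ x) (φ z), norm_sub_le_integral_norm_deriv hφ hφ' hx hz]
  have haverage := intervalIntegral.integral_mono_on (μ := volume) (hx.1.trans hx.2)
    intervalIntegrable_const (hcont.norm.intervalIntegrable _ _) hpointwise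
  rw [intervalIntegral.integral_const, smul_eq_mul] at haverage
  linarith

theorem integral_norm_sq_le_of_left_eq_zero (hφ : ∀ z, HasDerivAt φ (φ' z) z)
    (hφ' : Continuous φ') (h0 : φ 0 = 0) :
    ∫ z in (0 : ℝ)..1, ‖φ z‖ ^ 2 ≤ ∫ z in (0 : ℝ)..1, ‖φ' z‖ ^ 2 := by
  have hcont : Continuous φ := continuous_iff_continuousAt.2 fun z => (hφ z).continuousAt
  have hpointwise : ∀ z ∈ Set.Icc (0 : ℝ) 1, ‖φ z‖ ^ 2 ≤ ∫ s in (0 : ℝ)..1, ‖φ' s‖ ^ 2 :=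
    fun z hz => by
      refine le_trans ?_ (sq_integral_norm_le_integral_norm_sq hφ')
      gcongr
      simpa [h0] using norm_sub_le_integral_norm_deriv hφ hφ' hz (Set.left_mem_Icc.2 zero_le_one)
  simpa using intervalIntegral.integral_mono_on (μ := volume) zero_le_one
    ((hcont.norm.pow 2).intervalIntegrable _ _) intervalIntegrable_const hpointwise

/- The weight `6 z (1 - z)` has unit mass and vanishes at both ends, so integrating by parts
turns the weighted mean of `φ'` into an integral of `φ`. -/
theorem norm_integral_weight_smul_deriv_le (hφ : ∀ z, HasDerivAt φ (φ' z) z)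
    (hφ' : Continuous φ') :
    ‖∫ z in (0 : ℝ)..1, (6 * z * (1 - z)) • φ' z‖ ≤ 6 * ∫ z in (0 : ℝ)..1, ‖φ z‖ := by
  have hcont : Continuous φ := continuous_iff_continuousAt.2 fun z => (hφ z).continuousAt
  have hweight (z : ℝ) : HasDerivAt (fun z => 6 * z * (1 - z)) (6 - 12 * z) z := by
    refine (((hasDerivAt_id z).const_mul 6).mul ((hasDerivAt_id z).const_sub 1)).congr_deriv ?_
    simp only [id]
    ring
  have hparts := intervalIntegral.integral_smul_deriv_eq_deriv_smul
    (a := (0 : ℝ)) (b := 1) (fun z _ => hweight z) (fun z _ => hφ z)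
    (Continuous.intervalIntegrable (by fun_prop) _ _) (hφ'.intervalIntegrable _ _)
  rw [hparts, ← intervalIntegral.integral_const_mul]
  simp only [sub_self, mul_zero, zero_smul, mul_one, zero_sub, norm_neg, sub_zero]
  refine intervalIntegral.norm_integral_le_of_norm_le zero_le_one
    (Eventually.of_forall fun z hz => ?_) (Continuous.intervalIntegrable (by fun_prop) _ _)
  rw [norm_smul]
  gcongr
  rw [Real.norm_eq_abs, abs_le]
  constructor <;> linarith [hz.1, hz.2]

theorem norm_sub_integral_weight_smul_le (hφ : ∀ z, HasDerivAt φ (φ' z) z)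
    (hφ' : Continuous φ') (hx : x ∈ Set.Icc (0 : ℝ) 1) :
    ‖φ x - ∫ z in (0 : ℝ)..1, (6 * z * (1 - z)) • φ z‖ ≤ ∫ z in (0 : ℝ)..1, ‖φ' z‖ := by
  have hcont : Continuous φ := continuous_iff_continuousAt.2 fun z => (hφ z).continuousAt
  have hmass : ∫ z in (0 : ℝ)..1, 6 * z * (1 - z) = 1 := by
    have hprim (z : ℝ) : HasDerivAt (fun z => 3 * z ^ 2 - 2 * z ^ 3) (6 * z * (1 - z)) z := by
      refine (((hasDerivAt_pow 2 z).const_mul 3).sub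
        ((hasDerivAt_pow 3 z).const_mul 2)).congr_deriv ?_
      simp only [Nat.cast_ofNat]
      ring
    rw [intervalIntegral.integral_eq_sub_of_hasDerivAt (fun z _ => hprim z)
      (Continuous.intervalIntegrable (by fun_prop) _ _)]
    norm_num
  have hmean : φ x - ∫ z in (0 : ℝ)..1, (6 * z * (1 - z)) • φ z
      = ∫ z in (0 : ℝ)..1, (6 * z * (1 - z)) • (φ x - φ z) := by
    simp only [smul_sub]
    rw [intervalIntegral.integral_sub (Continuous.intervalIntegrable (by fun_prop) _ _)
      (Continuous.intervalIntegrable (by fun_prop) _ _), intervalIntegral.integral_smul_const,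
      hmass, one_smul]
  have hbound : ∫ z in (0 : ℝ)..1, 6 * z * (1 - z) * ∫ s in (0 : ℝ)..1, ‖φ' s‖
      = ∫ s in (0 : ℝ)..1, ‖φ' s‖ := by
    rw [intervalIntegral.integral_mul_const, hmass, one_mul]
  rw [hmean, ← hbound]
  refine intervalIntegral.norm_integral_le_of_norm_le zero_le_one
    (Eventually.of_forall fun z hz => ?_) (Continuous.intervalIntegrable (by fun_prop) _ _)
  have hweight : 0 ≤ 6 * z * (1 - z) := mul_nonneg (by linarith [hz.1]) (by linarith [hz.2])
  rw [norm_smul, Real.norm_of_nonneg hweight]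
  gcongr
  exact norm_sub_le_integral_norm_deriv hφ hφ' hx (Set.Ioc_subset_Icc_self hz)

theorem integral_norm_sq_deriv_le (hφ : ∀ z, HasDerivAt φ (φ' z) z)
    (hφ' : ∀ z, HasDerivAt φ' (φ'' z) z) (hφ'' : Continuous φ'') :
    ∫ z in (0 : ℝ)..1, ‖φ' z‖ ^ 2
      ≤ 2 * (∫ z in (0 : ℝ)..1, ‖φ'' z‖ ^ 2) + 72 * ∫ z in (0 : ℝ)..1, ‖φ z‖ ^ 2 := by
  have hcont : Continuous φ := continuous_iff_continuousAt.2 fun z => (hφ z).continuousAt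
  have hcont' : Continuous φ' := continuous_iff_continuousAt.2 fun z => (hφ' z).continuousAt
  have hpointwise : ∀ z ∈ Set.Icc (0 : ℝ) 1, ‖φ' z‖ ^ 2
      ≤ 2 * (∫ z in (0 : ℝ)..1, ‖φ'' z‖ ^ 2) + 72 * ∫ z in (0 : ℝ)..1, ‖φ z‖ ^ 2 := by
    intro z hz
    have hmean := norm_integral_weight_smul_deriv_le hφ hcont'
    have hosc := norm_sub_integral_weight_smul_le hφ' hφ'' hz
    have hnorm : ‖φ' z‖ ≤ (∫ z in (0 : ℝ)..1, ‖φ'' z‖) + 6 * ∫ z in (0 : ℝ)..1, ‖φ z‖ := by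
      linarith [norm_le_norm_sub_add (φ' z) (∫ z in (0 : ℝ)..1, (6 * z * (1 - z)) • φ' z)]
    calc ‖φ' z‖ ^ 2 ≤ ((∫ z in (0 : ℝ)..1, ‖φ'' z‖) + 6 * ∫ z in (0 : ℝ)..1, ‖φ z‖) ^ 2 := by
          gcongr
      _ ≤ 2 * ((∫ z in (0 : ℝ)..1, ‖φ'' z‖) ^ 2 + (6 * ∫ z in (0 : ℝ)..1, ‖φ z‖) ^ 2) :=
          add_sq_le
      _ ≤ _ := by
          linarith [sq_integral_norm_le_integral_norm_sq hφ'',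
            sq_integral_norm_le_integral_norm_sq hcont]
  simpa using intervalIntegral.integral_mono_on (μ := volume) zero_le_one
    ((hcont'.norm.pow 2).intervalIntegrable _ _) intervalIntegrable_const hpointwise

end IntervalInequalities

/-! ### Norms of time slices -/

section SpaceNorm

variable {F : Type*} [NormedAddCommGroup F]

/-- The square of the norm of `v(·, t)` in `L²(0, 1)`. -/
def spaceNormSq (v : ℝ → ℝ → F) (t : ℝ) : ℝ :=
  ∫ x in (0 : ℝ)..1, ‖v x t‖ ^ 2

theorem spaceNormSq_nonneg (v : ℝ → ℝ → F) (t : ℝ) : 0 ≤ spaceNormSq v t :=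
  intervalIntegral.integral_nonneg zero_le_one fun _ _ => sq_nonneg _

variable [NormedSpace ℝ F] {v w : ℝ → ℝ → F} {t : ℝ}

theorem IsSmooth.intervalIntegrable_norm_sq (hv : IsSmooth v) (t : ℝ) :
    IntervalIntegrable (fun x => ‖v x t‖ ^ 2) volume 0 1 :=
  ((hv.continuous_space t).norm.pow 2).intervalIntegrable _ _

theorem IsSmooth.spaceNormSq_le_mul (hv : IsSmooth v) (hw : IsSmooth w) {C : ℝ}
    (h : ∀ x ∈ Set.Icc (0 : ℝ) 1, ‖v x t‖ ^ 2 ≤ C * ‖w x t‖ ^ 2) :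
    spaceNormSq v t ≤ C * spaceNormSq w t := by
  rw [spaceNormSq, spaceNormSq, ← intervalIntegral.integral_const_mul]
  exact intervalIntegral.integral_mono_on zero_le_one (hv.intervalIntegrable_norm_sq t)
    ((hw.intervalIntegrable_norm_sq t).const_mul C) h

theorem IsSmooth.spaceNormSq_add_le (hv : IsSmooth v) (hw : IsSmooth w) (t : ℝ) :
    spaceNormSq (v + w) t ≤ 2 * (spaceNormSq v t + spaceNormSq w t) := by
  rw [spaceNormSq, spaceNormSq, spaceNormSq, ← intervalIntegral.integral_add
    (hv.intervalIntegrable_norm_sq t) (hw.intervalIntegrable_norm_sq t),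
    ← intervalIntegral.integral_const_mul]
  refine intervalIntegral.integral_mono_on zero_le_one ((hv.add hw).intervalIntegrable_norm_sq t)
    (((hv.intervalIntegrable_norm_sq t).add (hw.intervalIntegrable_norm_sq t)).const_mul 2)
    fun x _ => ?_
  exact (pow_le_pow_left₀ (norm_nonneg _) (norm_add_le (v x t) (w x t)) 2).trans add_sq_le

theorem IsSmooth.hasDerivAt_integral (hv : IsSmooth v) (a b t : ℝ) :
    HasDerivAt (fun s => ∫ x in a..b, v x s) (∫ x in a..b, PD 0 1 v x t) t := by
  obtain ⟨C, hC⟩ := (isCompact_uIcc.prod isCompact_Icc).exists_bound_of_continuousOn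
    (s := Set.uIcc a b ×ˢ Set.Icc (t - 1) (t + 1)) (hv.pd 0 1).continuous.continuousOn
  refine (intervalIntegral.hasDerivAt_integral_of_dominated_loc_of_deriv_le
    (F := fun s x => v x s) (F' := fun s x => PD 0 1 v x s) (bound := fun _ => C)
    (Icc_mem_nhds (by linarith) (by linarith) : Set.Icc (t - 1) (t + 1) ∈ 𝓝 t)
    (Eventually.of_forall fun s => (hv.continuous_space s).aestronglyMeasurable)
    ((hv.continuous_space t).intervalIntegrable _ _)
    ((hv.pd 0 1).continuous_space t).aestronglyMeasurable
    (Eventually.of_forall fun x hx s hs => hC (x, s) ⟨Set.uIoc_subset_uIcc hx, hs⟩)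
    intervalIntegrable_const (Eventually.of_forall fun x _ s _ => ?_)).2
  simpa only [PD_zero_zero] using hv.hasDerivAt_time 0 0 x s

theorem IsSmooth.continuous_integral (hv : IsSmooth v) (a b : ℝ) :
    Continuous fun s => ∫ x in a..b, v x s :=
  continuous_iff_continuousAt.2 fun t => (hv.hasDerivAt_integral a b t).continuousAt

theorem IsSmooth.spaceNormSq_le_of_left_eq_zero [CompleteSpace F] (hv : IsSmooth v)
    (h0 : v 0 t = 0) : spaceNormSq v t ≤ spaceNormSq (PD 1 0 v) t := by
  refine integral_norm_sq_le_of_left_eq_zero (fun x => ?_) ((hv.pd 1 0).continuous_space t) h0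
  simpa only [PD_zero_zero] using hv.hasDerivAt_space 0 0 x t

theorem IsSmooth.spaceNormSq_PD_one_zero_le [CompleteSpace F] (hv : IsSmooth v) (t : ℝ) :
    spaceNormSq (PD 1 0 v) t ≤ 2 * spaceNormSq (PD 2 0 v) t + 72 * spaceNormSq v t := by
  refine integral_norm_sq_deriv_le (fun x => ?_) (fun x => hv.hasDerivAt_space 1 0 x t)
    ((hv.pd 2 0).continuous_space t)
  simpa only [PD_zero_zero] using hv.hasDerivAt_space 0 0 x t

end SpaceNorm

section InnerProduct

variable {E : Type*} [NormedAddCommGroup E] [InnerProductSpace ℝ E] {v : ℝ → ℝ → E} {t T : ℝ}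

theorem abs_two_mul_inner_le (y z : E) : |2 * inner ℝ y z| ≤ ‖y‖ ^ 2 + ‖z‖ ^ 2 := by
  rw [abs_mul, abs_two]
  linarith [abs_real_inner_le_norm y z, two_mul_le_add_sq ‖y‖ ‖z‖]

theorem IsSmooth.norm_sq (hv : IsSmooth v) : IsSmooth fun x t => ‖v x t‖ ^ 2 :=
  ContDiff.norm_sq ℝ hv

theorem IsSmooth.PD_zero_one_norm_sq (hv : IsSmooth v) (x t : ℝ) :
    PD 0 1 (fun x t => ‖v x t‖ ^ 2) x t = 2 * inner ℝ (v x t) (PD 0 1 v x t) := by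
  rw [PD_zero_one_apply]
  simpa only [PD_zero_zero] using (hv.hasDerivAt_time 0 0 x t).norm_sq.deriv

theorem IsSmooth.continuous_spaceNormSq (hv : IsSmooth v) : Continuous (spaceNormSq v) :=
  hv.norm_sq.continuous_integral 0 1

theorem IsSmooth.abs_deriv_spaceNormSq_le (hv : IsSmooth v) (t : ℝ) :
    |∫ x in (0 : ℝ)..1, PD 0 1 (fun x t => ‖v x t‖ ^ 2) x t|
      ≤ spaceNormSq v t + spaceNormSq (PD 0 1 v) t := by
  have hint := (hv.intervalIntegrable_norm_sq t).add ((hv.pd 0 1).intervalIntegrable_norm_sq t)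
  rw [spaceNormSq, spaceNormSq, ← intervalIntegral.integral_add
    (hv.intervalIntegrable_norm_sq t) ((hv.pd 0 1).intervalIntegrable_norm_sq t)]
  refine (intervalIntegral.abs_integral_le_integral_abs zero_le_one).trans ?_
  refine intervalIntegral.integral_mono zero_le_one
    (((hv.norm_sq.pd 0 1).continuous_space t).abs.intervalIntegrable _ _) hint fun x => ?_
  simp only [hv.PD_zero_one_norm_sq]
  exact abs_two_mul_inner_le _ _

theorem IsSmooth.mul_spaceNormSq_le_integral (hv : IsSmooth v) (ht : t ∈ Set.Icc 0 T) :
    T * spaceNormSq v t ≤ (1 + T) * (∫ s in (0 : ℝ)..T, spaceNormSq v s)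
      + T * ∫ s in (0 : ℝ)..T, spaceNormSq (PD 0 1 v) s := by
  have hT : 0 ≤ T := ht.1.trans ht.2
  have hcont := hv.continuous_spaceNormSq
  have hcont' := (hv.pd 0 1).continuous_spaceNormSq
  have hderivCont := (hv.norm_sq.pd 0 1).continuous_integral 0 1
  have hsobolev := length_mul_norm_le_integral (φ := spaceNormSq v)
    (hv.norm_sq.hasDerivAt_integral 0 1) hderivCont ht
  have hderiv := intervalIntegral.integral_mono (μ := volume) hT
    (hderivCont.abs.intervalIntegrable _ _) ((hcont.fun_add hcont').intervalIntegrable _ _)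
    hv.abs_deriv_spaceNormSq_le
  rw [intervalIntegral.integral_add (hcont.intervalIntegrable _ _)
    (hcont'.intervalIntegrable _ _)] at hderiv
  have hderiv' := mul_le_mul_of_nonneg_left hderiv hT
  simp only [Real.norm_of_nonneg (spaceNormSq_nonneg v _), sub_zero, Real.norm_eq_abs]
    at hsobolev
  linarith

end InnerProduct

/-! ### The energy estimate -/

section Energy

variable {E : Type*} [NormedAddCommGroup E] [InnerProductSpace ℝ E]
variable {c : ℝ → ℝ} {b : ℝ → ℝ → ℝ} {v w z : ℝ → ℝ → E} {B c₀ K T t : ℝ}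

/-- The Euler–Bernoulli operator `∂ₜ²v + ∂ₓ²(c ∂ₓ²v) + b ∂ₓ²v`. -/
def beamOp (c : ℝ → ℝ) (b : ℝ → ℝ → ℝ) (v : ℝ → ℝ → E) : ℝ → ℝ → E :=
  PD 0 2 v + PD 2 0 (spatial c • PD 2 0 v) + b • PD 2 0 v

/-- The clamped boundary conditions at time `t`. -/
structure IsClampedAt (v : ℝ → ℝ → E) (t : ℝ) : Prop where
  left : v 0 t = 0
  right : v 1 t = 0
  deriv_left : PD 1 0 v 0 t = 0
  deriv_right : PD 1 0 v 1 t = 0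

/-- The energy `‖∂ₜv‖² + ∫ c |∂ₓ²v|²` at time `t`. -/
def beamEnergy (c : ℝ → ℝ) (v : ℝ → ℝ → E) (t : ℝ) : ℝ :=
  ∫ x in (0 : ℝ)..1, (‖PD 0 1 v x t‖ ^ 2 + c x * ‖PD 2 0 v x t‖ ^ 2)

theorem isSmooth_beamOp (hc : IsSmooth (spatial c)) (hb : IsSmooth b) (hv : IsSmooth v) :
    IsSmooth (beamOp c b v) :=
  ((hv.pd 0 2).add ((hc.smul (hv.pd 2 0)).pd 2 0)).add (hb.smul (hv.pd 2 0))

theorem IsSmooth.PD_succ_eq_zero (hv : IsSmooth v) {k l : ℕ} {x : ℝ}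
    (h : ∀ s ∈ Set.Icc 0 T, PD k l v x s = 0) (hT : 0 < T) (ht : t ∈ Set.Icc 0 T) :
    PD k (l + 1) v x t = 0 :=
  (uniqueDiffOn_Icc hT t ht).eq_deriv _ (hv.hasDerivAt_time k l x t).hasDerivWithinAt
    ((hasDerivWithinAt_const t _ 0).congr h (h t ht))

theorem IsSmooth.isClampedAt_pd (hv : IsSmooth v) (hT : 0 < T)
    (h : ∀ t ∈ Set.Icc 0 T, IsClampedAt v t) (l : ℕ) :
    ∀ t ∈ Set.Icc 0 T, IsClampedAt (PD 0 l v) t := by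
  induction l with
  | zero => rwa [PD_zero_zero]
  | succ l ih =>
    have hspace (j : ℕ) : PD 1 0 (PD 0 j v) = PD 1 j v := PD_one_zero_PD 0 j v
    refine fun t ht => ⟨?_, ?_, ?_, ?_⟩
    · exact hv.PD_succ_eq_zero (fun s hs => (ih s hs).left) hT ht
    · exact hv.PD_succ_eq_zero (fun s hs => (ih s hs).right) hT ht
    · rw [hspace]
      exact hv.PD_succ_eq_zero (fun s hs => hspace l ▸ (ih s hs).deriv_left) hT ht
    · rw [hspace]
      exact hv.PD_succ_eq_zero (fun s hs => hspace l ▸ (ih s hs).deriv_right) hT ht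

theorem IsClampedAt.integral_inner_PD_two (hz : IsClampedAt z t) (hsw : IsSmooth w)
    (hsz : IsSmooth z) :
    ∫ x in (0 : ℝ)..1, inner ℝ (w x t) (PD 2 0 z x t)
      = ∫ x in (0 : ℝ)..1, inner ℝ (PD 2 0 w x t) (z x t) := by
  have hw0 := hsw.continuous_space t
  have hw2 := (hsw.pd 2 0).continuous_space t
  have hz0 := hsz.continuous_space t
  have hz2 := (hsz.pd 2 0).continuous_space t
  have hderiv (x : ℝ) : HasDerivAt
      (fun x => (inner ℝ (w x t) (PD 1 0 z x t) : ℝ) - inner ℝ (PD 1 0 w x t) (z x t))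
      (inner ℝ (w x t) (PD 2 0 z x t) - inner ℝ (PD 2 0 w x t) (z x t)) x := by
    have hw := hsw.hasDerivAt_space 0 0 x t
    have hz := hsz.hasDerivAt_space 0 0 x t
    simp only [PD_zero_zero, zero_add] at hw hz
    refine ((hw.inner ℝ (hsz.hasDerivAt_space 1 0 x t)).sub
      ((hsw.hasDerivAt_space 1 0 x t).inner ℝ hz)).congr_deriv ?_
    ring
  have hFTC := intervalIntegral.integral_eq_sub_of_hasDerivAt (fun x _ => hderiv x)
    (Continuous.intervalIntegrable (by fun_prop) 0 1)
  rw [intervalIntegral.integral_sub (Continuous.intervalIntegrable (by fun_prop) _ _)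
    (Continuous.intervalIntegrable (by fun_prop) _ _)] at hFTC
  simp only [hz.left, hz.right, hz.deriv_left, hz.deriv_right, inner_zero_right, sub_self] at hFTC
  exact sub_eq_zero.1 hFTC

theorem isSmooth_energy_density (hc : IsSmooth (spatial c)) (hv : IsSmooth v) :
    IsSmooth fun x t => ‖PD 0 1 v x t‖ ^ 2 + c x * ‖PD 2 0 v x t‖ ^ 2 :=
  (hv.pd 0 1).norm_sq.add (hc.smul (hv.pd 2 0).norm_sq)

theorem PD_zero_one_energy_density (hc : IsSmooth (spatial c)) (hv : IsSmooth v) (x t : ℝ) :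
    PD 0 1 (fun x t => ‖PD 0 1 v x t‖ ^ 2 + c x * ‖PD 2 0 v x t‖ ^ 2) x t
      = 2 * inner ℝ (PD 0 2 v x t) (PD 0 1 v x t)
        + 2 * inner ℝ ((spatial c • PD 2 0 v) x t) (PD 2 0 (PD 0 1 v) x t) := by
  have hsum := ((hv.pd 0 1).norm_sq).PD_add
    (hc.smul (hv.pd 2 0).norm_sq) 0 1
  refine (congrFun₂ hsum x t).trans ?_
  rw [PD_zero_spatial_smul, PD_PD_zero_one]
  simp only [Pi.add_apply, Pi.smul_apply', (hv.pd _ _).PD_zero_one_norm_sq, hv.PD_zero_one_PD,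
    real_inner_smul_left, smul_eq_mul, Pi.mul_apply, real_inner_comm (PD 0 2 v x t)]
  ring

theorem hasDerivAt_beamEnergy (hc : IsSmooth (spatial c)) (hv : IsSmooth v)
    (hclamped : IsClampedAt (PD 0 1 v) t) :
    HasDerivAt (beamEnergy c v) (∫ x in (0 : ℝ)..1, 2 * inner ℝ
      (PD 0 2 v x t + PD 2 0 (spatial c • PD 2 0 v) x t) (PD 0 1 v x t)) t := by
  refine ((isSmooth_energy_density hc hv).hasDerivAt_integral 0 1 t).congr_deriv ?_
  simp only [PD_zero_one_energy_density hc hv, inner_add_left, mul_add]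
  have hw := hc.smul (hv.pd 2 0)
  generalize spatial c • PD 2 0 v = w at hw ⊢
  have hv1 := (hv.pd 0 1).continuous_space t
  have hv2 := (hv.pd 0 2).continuous_space t
  have hv21 := ((hv.pd 0 1).pd 2 0).continuous_space t
  have hw0 := hw.continuous_space t
  have hw2 := (hw.pd 2 0).continuous_space t
  rw [intervalIntegral.integral_add, intervalIntegral.integral_add]
  · simp only [intervalIntegral.integral_const_mul, hclamped.integral_inner_PD_two hw (hv.pd 0 1)]
  all_goals exact Continuous.intervalIntegrable (by fun_prop) _ _

theorem two_mul_inner_sub_smul_le {β γ : ℝ} (hc₀ : 0 < c₀) (hγ : c₀ ≤ γ) (hβ : |β| ≤ B)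
    (g y z : E) :
    2 * inner ℝ (g - β • z) y ≤ ‖g‖ ^ 2 + (1 + B + B / c₀) * (‖y‖ ^ 2 + γ * ‖z‖ ^ 2) := by
  have hB : 0 ≤ B := (abs_nonneg β).trans hβ
  have hγ0 : 0 ≤ γ := hc₀.le.trans hγ
  have hforce : 2 * inner ℝ g y ≤ ‖g‖ ^ 2 + ‖y‖ ^ 2 :=
    (le_abs_self _).trans (abs_two_mul_inner_le g y)
  have hlower : -(β * (2 * inner ℝ z y)) ≤ B * (‖z‖ ^ 2 + ‖y‖ ^ 2) := by
    refine (neg_le_abs _).trans ?_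
    rw [abs_mul]
    exact mul_le_mul hβ (abs_two_mul_inner_le z y) (abs_nonneg _) hB
  have hz : ‖z‖ ^ 2 ≤ γ * ‖z‖ ^ 2 / c₀ := by
    rw [le_div_iff₀ hc₀, mul_comm]
    gcongr
  calc 2 * inner ℝ (g - β • z) y = 2 * inner ℝ g y + -(β * (2 * inner ℝ z y)) := by
        rw [inner_sub_left, real_inner_smul_left]
        ring
    _ ≤ ‖g‖ ^ 2 + ‖y‖ ^ 2 + B * (γ * ‖z‖ ^ 2 / c₀ + ‖y‖ ^ 2) := by
        linarith [mul_le_mul_of_nonneg_left hz hB]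
    _ ≤ ‖g‖ ^ 2 + ‖y‖ ^ 2 + B * (γ * ‖z‖ ^ 2 / c₀ + ‖y‖ ^ 2)
          + (B / c₀ * ‖y‖ ^ 2 + (1 + B) * (γ * ‖z‖ ^ 2)) := le_add_of_nonneg_right (by positivity)
    _ = _ := by ring

theorem deriv_beamEnergy_le (hc₀ : 0 < c₀) (hc : IsSmooth (spatial c))
    (hc₀c : ∀ x ∈ Set.Icc (0 : ℝ) 1, c₀ ≤ c x) (hb : IsSmooth b)
    (hbB : ∀ x ∈ Set.Icc (0 : ℝ) 1, |b x t| ≤ B) (hv : IsSmooth v) :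
    ∫ x in (0 : ℝ)..1, 2 * inner ℝ
      (PD 0 2 v x t + PD 2 0 (spatial c • PD 2 0 v) x t) (PD 0 1 v x t)
      ≤ spaceNormSq (beamOp c b v) t + (1 + B + B / c₀) * beamEnergy c v t := by
  have hop := isSmooth_beamOp hc hb hv
  have hw := hc.smul (hv.pd 2 0)
  have hv1 := (hv.pd 0 1).continuous_space t
  have hv2 := (hv.pd 0 2).continuous_space t
  have hw2 := (hw.pd 2 0).continuous_space t
  have hdensity := (isSmooth_energy_density hc hv).continuous_space t
  rw [spaceNormSq, beamEnergy, ← intervalIntegral.integral_const_mul,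
    ← intervalIntegral.integral_add (hop.intervalIntegrable_norm_sq t)
      ((hdensity.intervalIntegrable _ _).const_mul _)]
  refine intervalIntegral.integral_mono_on zero_le_one
    (Continuous.intervalIntegrable (by fun_prop) _ _)
    ((hop.intervalIntegrable_norm_sq t).add ((hdensity.intervalIntegrable _ _).const_mul _))
    fun x hx => ?_
  have hequation : PD 0 2 v x t + PD 2 0 (spatial c • PD 2 0 v) x t
      = beamOp c b v x t - b x t • PD 2 0 v x t := by
    simp [beamOp]
  rw [hequation]
  exact two_mul_inner_sub_smul_le hc₀ (hc₀c x hx) (hbB x hx) _ _ _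

theorem beamEnergy_nonneg (hc : ∀ x ∈ Set.Icc (0 : ℝ) 1, 0 ≤ c x) (v : ℝ → ℝ → E) (t : ℝ) :
    0 ≤ beamEnergy c v t :=
  intervalIntegral.integral_nonneg zero_le_one fun x hx =>
    add_nonneg (sq_nonneg _) (mul_nonneg (hc x hx) (sq_nonneg _))

theorem gronwallBound_le_mul_exp {δ : ℝ} (hδ : 0 ≤ δ) {lam : ℝ} (hlam : 1 ≤ lam) (hK : 0 ≤ K)
    (ht : t ≤ T) : gronwallBound δ lam K t ≤ (δ + K) * Real.exp (lam * T) := by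
  have hexp : Real.exp (lam * t) ≤ Real.exp (lam * T) := by gcongr
  have hdiv : K / lam ≤ K := div_le_self hK hlam
  rw [gronwallBound_of_K_ne_0 (by positivity)]
  calc δ * Real.exp (lam * t) + K / lam * (Real.exp (lam * t) - 1)
      ≤ δ * Real.exp (lam * t) + K / lam * Real.exp (lam * t) := by
        gcongr
        exact sub_le_self _ zero_le_one
    _ ≤ δ * Real.exp (lam * T) + K * Real.exp (lam * T) := by gcongr
    _ = (δ + K) * Real.exp (lam * T) := by ring

theorem beamEnergy_le (hT : 0 < T) (hc₀ : 0 < c₀) (hc : IsSmooth (spatial c))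
    (hc₀c : ∀ x ∈ Set.Icc (0 : ℝ) 1, c₀ ≤ c x) (hb : IsSmooth b)
    (hbB : ∀ x ∈ Set.Icc (0 : ℝ) 1, ∀ t ∈ Set.Icc 0 T, |b x t| ≤ B) (hv : IsSmooth v)
    (hclamped : ∀ t ∈ Set.Icc 0 T, IsClampedAt v t)
    (hK : ∀ t ∈ Set.Icc 0 T, spaceNormSq (beamOp c b v) t ≤ K) (ht : t ∈ Set.Icc 0 T) :
    beamEnergy c v t ≤ (beamEnergy c v 0 + K) * Real.exp ((1 + B + B / c₀) * T) := by
  have h0 : (0 : ℝ) ∈ Set.Icc 0 T := ⟨le_rfl, hT.le⟩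
  have hB : 0 ≤ B := (abs_nonneg _).trans (hbB 0 ⟨le_rfl, zero_le_one⟩ 0 h0)
  have hK0 : 0 ≤ K := (spaceNormSq_nonneg _ _).trans (hK 0 h0)
  have hderiv (s : ℝ) (hs : s ∈ Set.Icc 0 T) := hasDerivAt_beamEnergy hc hv
    (hv.isClampedAt_pd hT hclamped 1 s hs)
  have hgronwall := le_gronwallBound_of_liminf_deriv_right_le (a := 0) (b := T)
    (δ := beamEnergy c v 0) (K := 1 + B + B / c₀) (ε := K)
    (fun s hs => (hderiv s hs).continuousAt.continuousWithinAt)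
    (fun s hs _ hr => (hderiv s ⟨hs.1, hs.2.le⟩).hasDerivWithinAt.liminf_right_slope_le hr)
    le_rfl (fun s hs => ?_) t ht
  · rw [sub_zero] at hgronwall
    exact hgronwall.trans <| gronwallBound_le_mul_exp
      (beamEnergy_nonneg (fun x hx => hc₀.le.trans (hc₀c x hx)) v 0)
      (by rw [add_assoc]; exact le_add_of_nonneg_right (by positivity)) hK0 ht.2
  · have hs' : s ∈ Set.Icc 0 T := ⟨hs.1, hs.2.le⟩
    linarith [deriv_beamEnergy_le hc₀ hc hc₀c hb (fun x hx => hbB x hx s hs') hv, hK s hs']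

theorem spaceNormSq_PD_zero_one_le_beamEnergy (hc : IsSmooth (spatial c))
    (hc0 : ∀ x ∈ Set.Icc (0 : ℝ) 1, 0 ≤ c x) (hv : IsSmooth v) (t : ℝ) :
    spaceNormSq (PD 0 1 v) t ≤ beamEnergy c v t :=
  intervalIntegral.integral_mono_on zero_le_one ((hv.pd 0 1).intervalIntegrable_norm_sq t)
    (((isSmooth_energy_density hc hv).continuous_space t).intervalIntegrable _ _)
    fun x hx => le_add_of_nonneg_right (mul_nonneg (hc0 x hx) (sq_nonneg _))

theorem mul_spaceNormSq_PD_two_zero_le_beamEnergy (hc : IsSmooth (spatial c))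
    (hc₀c : ∀ x ∈ Set.Icc (0 : ℝ) 1, c₀ ≤ c x) (hv : IsSmooth v) (t : ℝ) :
    c₀ * spaceNormSq (PD 2 0 v) t ≤ beamEnergy c v t := by
  rw [spaceNormSq, ← intervalIntegral.integral_const_mul]
  refine intervalIntegral.integral_mono_on zero_le_one
    (((hv.pd 2 0).intervalIntegrable_norm_sq t).const_mul c₀)
    (((isSmooth_energy_density hc hv).continuous_space t).intervalIntegrable _ _) fun x hx => ?_
  exact (mul_le_mul_of_nonneg_right (hc₀c x hx) (sq_nonneg _)).trans
    (le_add_of_nonneg_left (sq_nonneg _))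

theorem beamEnergy_le_of_le {C : ℝ} (hc : IsSmooth (spatial c))
    (hcC : ∀ x ∈ Set.Icc (0 : ℝ) 1, c x ≤ C) (hv : IsSmooth v) (t : ℝ) :
    beamEnergy c v t ≤ spaceNormSq (PD 0 1 v) t + C * spaceNormSq (PD 2 0 v) t := by
  rw [spaceNormSq, spaceNormSq, ← intervalIntegral.integral_const_mul,
    ← intervalIntegral.integral_add ((hv.pd 0 1).intervalIntegrable_norm_sq t)
      (((hv.pd 2 0).intervalIntegrable_norm_sq t).const_mul C)]
  refine intervalIntegral.integral_mono_on zero_le_one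
    (((isSmooth_energy_density hc hv).continuous_space t).intervalIntegrable _ _)
    (((hv.pd 0 1).intervalIntegrable_norm_sq t).add
      (((hv.pd 2 0).intervalIntegrable_norm_sq t).const_mul C)) fun x hx => ?_
  gcongr
  exact hcC x hx

end Energy

/-! ### Nets bounded up to a slow scale factor -/

section SlowScale

variable {r s : ℝ → ℝ}

theorem SlowScaleNet.const (C : ℝ) : SlowScaleNet fun _ => C := fun _ =>
  (isLittleO_const_left.2 <| Or.inr <|
    tendsto_norm_atTop_atTop.comp tendsto_inv_nhdsGT_zero).isBigO

theorem SlowScaleNet.add (hr : SlowScaleNet r) (hs : SlowScaleNet s) :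
    SlowScaleNet fun ε => r ε + s ε := fun p => by
  refine (IsBigO.of_bound (2 ^ (p - 1)) (Eventually.of_forall fun ε => ?_)).trans
    ((hr p).add (hs p))
  rw [Real.norm_of_nonneg (by positivity), Real.norm_of_nonneg (by positivity)]
  calc |r ε + s ε| ^ p ≤ (|r ε| + |s ε|) ^ p := by
        gcongr
        exact abs_add_le _ _
    _ ≤ 2 ^ (p - 1) * (|r ε| ^ p + |s ε| ^ p) := add_pow_le (abs_nonneg _) (abs_nonneg _) p

theorem SlowScaleNet.pow (hr : SlowScaleNet r) (n : ℕ) : SlowScaleNet fun ε => r ε ^ n :=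
  fun p => by simpa only [abs_pow, ← pow_mul] using hr (n * p)

theorem SlowScaleNet.mul (hr : SlowScaleNet r) (hs : SlowScaleNet s) :
    SlowScaleNet fun ε => r ε * s ε := fun p => by
  refine (IsBigO.of_bound 1 (Eventually.of_forall fun ε => ?_)).trans
    ((hr (p * 2)).add (hs (p * 2)))
  rw [Real.norm_of_nonneg (by positivity), Real.norm_of_nonneg (by positivity), abs_mul, mul_pow,
    pow_mul, pow_mul, one_mul]
  have hnonneg : 0 ≤ |r ε| ^ p * |s ε| ^ p := by positivity
  linarith [two_mul_le_add_sq (|r ε| ^ p) (|s ε| ^ p)]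

end SlowScale

section SlowNets

variable {F : Type*} [NormedAddCommGroup F] [NormedSpace ℝ F]
variable {S S' : Set ℝ} {A : ℝ → ℝ} {f : ℝ → ℝ → ℝ → ℝ} {a v w : ℝ → ℝ → ℝ → F} {k l : ℕ}

/-- A net of smooth functions whose squared `L²(0, 1)` norms at the times in `S` are bounded by a
slow scale net times the reference growth `A`. -/
def SlowL2 (S : Set ℝ) (A : ℝ → ℝ) (v : ℝ → ℝ → ℝ → F) : Prop :=
  ∃ s, SlowScaleNet s ∧
    ∀ᶠ ε in 𝓝[>] 0, IsSmooth (v ε) ∧ ∀ t ∈ S, spaceNormSq (v ε) t ≤ s ε * A ε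

/-- A net of smooth coefficients on `[0, 1] × S` that is of slow scale with all its derivatives. -/
structure SlowCoeff (S : Set ℝ) (f : ℝ → ℝ → ℝ → ℝ) : Prop where
  smooth : ∀ᶠ ε in 𝓝[>] 0, IsSmooth (f ε)
  bound : ∀ k l, ∃ s, SlowScaleNet s ∧
    ∀ᶠ ε in 𝓝[>] 0, ∀ x ∈ Set.Icc (0 : ℝ) 1, ∀ t ∈ S, |PD k l (f ε) x t| ≤ s ε

theorem SlowCoeff.mono (hf : SlowCoeff S f) (h : S' ⊆ S) : SlowCoeff S' f where
  smooth := hf.smooth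
  bound k l := by
    obtain ⟨s, hs, hbound⟩ := hf.bound k l
    exact ⟨s, hs, hbound.mono fun ε hε x hx t ht => hε x hx t (h ht)⟩

theorem SlowCoeff.pd (hf : SlowCoeff S f) (i j : ℕ) : SlowCoeff S fun ε => PD i j (f ε) where
  smooth := hf.smooth.mono fun _ h => h.pd i j
  bound k l := by
    obtain ⟨s, hs, hbound⟩ := hf.bound (i + k) (j + l)
    refine ⟨s, hs, ?_⟩
    filter_upwards [hbound, hf.smooth] with ε hε hsmooth
    rwa [hsmooth.PD_PD]

theorem SlowL2.smooth (hv : SlowL2 S A v) : ∀ᶠ ε in 𝓝[>] 0, IsSmooth (v ε) :=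
  hv.choose_spec.2.mono fun _ h => h.1

theorem SlowL2.congr (hv : SlowL2 S A v) (h : ∀ᶠ ε in 𝓝[>] 0, w ε = v ε) : SlowL2 S A w := by
  obtain ⟨s, hs, hbound⟩ := hv
  refine ⟨s, hs, ?_⟩
  filter_upwards [hbound, h] with ε hε heq
  rwa [heq]

theorem SlowL2.mono (hv : SlowL2 S A v) (h : S' ⊆ S) : SlowL2 S' A v := by
  obtain ⟨s, hs, hbound⟩ := hv
  exact ⟨s, hs, hbound.mono fun ε hε => ⟨hε.1, fun t ht => hε.2 t (h ht)⟩⟩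

theorem slowL2_PD_PD_iff (hv : ∀ᶠ ε in 𝓝[>] 0, IsSmooth (v ε)) (k l i j : ℕ) :
    SlowL2 S A (fun ε => PD k l (PD i j (v ε))) ↔ SlowL2 S A fun ε => PD (i + k) (j + l) (v ε) :=
  ⟨fun h => h.congr (hv.mono fun _ hv => (hv.PD_PD k l i j).symm),
    fun h => h.congr (hv.mono fun _ hv => hv.PD_PD k l i j)⟩

theorem SlowL2.zero : SlowL2 S A fun _ => (0 : ℝ → ℝ → F) :=
  ⟨_, SlowScaleNet.const 0, Eventually.of_forall fun _ =>
    ⟨contDiff_const, fun _ _ => by simp [spaceNormSq]⟩⟩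

theorem SlowL2.add (hv : SlowL2 S A v) (hw : SlowL2 S A w) :
    SlowL2 S A fun ε => v ε + w ε := by
  obtain ⟨r, hr, hvr⟩ := hv
  obtain ⟨s, hs, hws⟩ := hw
  refine ⟨_, (SlowScaleNet.const 2).mul (hr.add hs), ?_⟩
  filter_upwards [hvr, hws] with ε hv hw
  refine ⟨hv.1.add hw.1, fun t ht => (hv.1.spaceNormSq_add_le hw.1 t).trans ?_⟩
  linarith [hv.2 t ht, hw.2 t ht]

theorem SlowL2.neg (hv : SlowL2 S A v) : SlowL2 S A fun ε => -v ε := by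
  obtain ⟨s, hs, hbound⟩ := hv
  refine ⟨s, hs, hbound.mono fun ε h => ⟨ContDiff.neg h.1, fun t ht => ?_⟩⟩
  simpa only [spaceNormSq, Pi.neg_apply, norm_neg] using h.2 t ht

theorem SlowL2.sub (hv : SlowL2 S A v) (hw : SlowL2 S A w) :
    SlowL2 S A fun ε => v ε - w ε := by
  simpa only [sub_eq_add_neg] using hv.add hw.neg

theorem SlowL2.smul (ha : SlowL2 S A a) (hf : SlowCoeff S f) :
    SlowL2 S A fun ε => f ε • a ε := by
  obtain ⟨r, hr, hfr⟩ := hf.bound 0 0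
  obtain ⟨s, hs, has⟩ := ha
  refine ⟨_, (hr.pow 2).mul hs, ?_⟩
  filter_upwards [hfr, has, hf.smooth] with ε hfr ha hf
  rw [PD_zero_zero] at hfr
  refine ⟨hf.smul ha.1, fun t ht => ?_⟩
  have hpointwise : ∀ x ∈ Set.Icc (0 : ℝ) 1, ‖(f ε • a ε) x t‖ ^ 2 ≤ r ε ^ 2 * ‖a ε x t‖ ^ 2 :=
    fun x hx => by
      rw [Pi.smul_apply', Pi.smul_apply', norm_smul, mul_pow, Real.norm_eq_abs]
      gcongr
      exact hfr x hx t ht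
  calc spaceNormSq (f ε • a ε) t ≤ r ε ^ 2 * spaceNormSq (a ε) t :=
        (hf.smul ha.1).spaceNormSq_le_mul ha.1 hpointwise
    _ ≤ r ε ^ 2 * (s ε * A ε) := by gcongr; exact ha.2 t ht
    _ = r ε ^ 2 * s ε * A ε := (mul_assoc _ _ _).symm

theorem SlowL2.of_smul {c₀ : ℝ} (hc₀ : 0 < c₀) (hfa : SlowL2 S A fun ε => f ε • a ε)
    (ha : ∀ᶠ ε in 𝓝[>] 0, IsSmooth (a ε))
    (hf : ∀ᶠ ε in 𝓝[>] 0, ∀ x ∈ Set.Icc (0 : ℝ) 1, ∀ t ∈ S, c₀ ≤ f ε x t) : SlowL2 S A a := by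
  obtain ⟨s, hs, hbound⟩ := hfa
  refine ⟨_, (SlowScaleNet.const ((c₀⁻¹) ^ 2)).mul hs, ?_⟩
  filter_upwards [hbound, ha, hf] with ε hfa ha hf
  refine ⟨ha, fun t ht => ?_⟩
  have hpointwise : ∀ x ∈ Set.Icc (0 : ℝ) 1,
      ‖a ε x t‖ ^ 2 ≤ c₀⁻¹ ^ 2 * ‖(f ε • a ε) x t‖ ^ 2 := fun x hx => by
    rw [← mul_pow, Pi.smul_apply', Pi.smul_apply', norm_smul]
    gcongr
    rw [← div_eq_inv_mul, le_div_iff₀ hc₀, mul_comm]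
    gcongr
    exact (hf x hx t ht).trans (le_abs_self _)
  calc spaceNormSq (a ε) t ≤ c₀⁻¹ ^ 2 * spaceNormSq (f ε • a ε) t :=
        ha.spaceNormSq_le_mul hfa.1 hpointwise
    _ ≤ c₀⁻¹ ^ 2 * (s ε * A ε) := by gcongr; exact hfa.2 t ht
    _ = c₀⁻¹ ^ 2 * s ε * A ε := (mul_assoc _ _ _).symm

theorem SlowL2.of_PD_one_zero [CompleteSpace F] (hv : SlowL2 S A fun ε => PD 1 0 (v ε))
    (hsmooth : ∀ᶠ ε in 𝓝[>] 0, IsSmooth (v ε))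
    (h0 : ∀ᶠ ε in 𝓝[>] 0, ∀ t ∈ S, v ε 0 t = 0) : SlowL2 S A v := by
  obtain ⟨s, hs, hbound⟩ := hv
  refine ⟨s, hs, ?_⟩
  filter_upwards [hbound, hsmooth, h0] with ε hbound hv h0
  exact ⟨hv, fun t ht => (hv.spaceNormSq_le_of_left_eq_zero (h0 t ht)).trans (hbound.2 t ht)⟩

theorem SlowL2.PD_one_zero [CompleteSpace F] (hv : SlowL2 S A v)
    (hv2 : SlowL2 S A fun ε => PD 2 0 (v ε)) : SlowL2 S A fun ε => PD 1 0 (v ε) := by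
  obtain ⟨r, hr, hvr⟩ := hv
  obtain ⟨s, hs, hvs⟩ := hv2
  refine ⟨_, ((SlowScaleNet.const 2).mul hs).add ((SlowScaleNet.const 72).mul hr), ?_⟩
  filter_upwards [hvr, hvs] with ε hv hv2
  refine ⟨hv.1.pd 1 0, fun t ht => (hv.1.spaceNormSq_PD_one_zero_le t).trans ?_⟩
  linarith [hv.2 t ht, hv2.2 t ht]

/-- The commutator `[∂ₓᵏ∂ₜˡ, f]` of a partial derivative and multiplication by `f`. -/
def pdCommutator (k l : ℕ) (f : ℝ → ℝ → ℝ) (a : ℝ → ℝ → F) : ℝ → ℝ → F :=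
  PD k l (f • a) - f • PD k l a

theorem IsSmooth.pdCommutator_add {f : ℝ → ℝ → ℝ} {a : ℝ → ℝ → F} (hf : IsSmooth f)
    (ha : IsSmooth a) {i j : ℕ} (hleibniz : PD i j (f • a) = PD i j f • a + f • PD i j a)
    (k l : ℕ) :
    pdCommutator (i + k) (j + l) f a = pdCommutator k l (PD i j f) a + PD i j f • PD k l a
      + pdCommutator k l f (PD i j a) := by
  simp only [pdCommutator]
  rw [← (hf.smul ha).PD_PD, hleibniz, ((hf.pd i j).smul ha).PD_add (hf.smul (ha.pd i j)),
    ha.PD_PD]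
  abel

/-- Only derivatives of `a` of lower order enter a commutator. -/
theorem SlowCoeff.slowL2_pdCommutator (hf : SlowCoeff S f) (ha : ∀ᶠ ε in 𝓝[>] 0, IsSmooth (a ε))
    (k l : ℕ)
    (h : ∀ p q, p ≤ k → q ≤ l → p + q < k + l → SlowL2 S A fun ε => PD p q (a ε)) :
    SlowL2 S A fun ε => pdCommutator k l (f ε) (a ε) := by
  induction k generalizing f a with
  | succ k ih =>
    have hcoeff := ih (hf.pd 1 0) ha fun p q hp hq hpq => h p q (by omega) hq (by omega)
    have hfun := ih hf (a := fun ε => PD 1 0 (a ε)) (ha.mono fun _ h => h.pd 1 0)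
      fun p q hp hq hpq => (slowL2_PD_PD_iff ha p q 1 0).2 <|
        h (1 + p) (0 + q) (by omega) (by omega) (by omega)
    refine ((hcoeff.add ((h k l (by omega) le_rfl (by omega)).smul (hf.pd 1 0))).add hfun).congr ?_
    filter_upwards [hf.smooth, ha] with ε hf ha
    simpa only [zero_add, add_comm 1] using hf.pdCommutator_add ha (hf.PD_one_zero_smul ha) k l
  | zero =>
    induction l generalizing f a with
    | zero => exact SlowL2.zero.congr (.of_forall fun ε => by simp [pdCommutator, PD_zero_zero])
    | succ l ih =>
      have hcoeff := ih (hf.pd 0 1) ha fun p q hp _ hpq => h p q hp (by omega) (by omega)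
      have hfun := ih hf (a := fun ε => PD 0 1 (a ε)) (ha.mono fun _ h => h.pd 0 1)
        fun p q hp _ hpq => (slowL2_PD_PD_iff ha p q 0 1).2 <|
          h (0 + p) (1 + q) (by omega) (by omega) (by omega)
      refine ((hcoeff.add ((h 0 l le_rfl (by omega) (by omega)).smul (hf.pd 0 1))).add
        hfun).congr ?_
      filter_upwards [hf.smooth, ha] with ε hf ha
      simpa only [zero_add, add_comm 1] using hf.pdCommutator_add ha (hf.PD_zero_one_smul ha) 0 l

theorem SlowCoeff.slowL2_PD_smul (hf : SlowCoeff S f) (k l : ℕ)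
    (h : ∀ p ≤ k, ∀ q ≤ l, SlowL2 S A fun ε => PD p q (a ε)) :
    SlowL2 S A fun ε => PD k l (f ε • a ε) := by
  have ha : ∀ᶠ ε in 𝓝[>] 0, IsSmooth (a ε) :=
    (h 0 zero_le 0 zero_le).smooth.mono fun ε h => by rwa [PD_zero_zero] at h
  have hcomm := hf.slowL2_pdCommutator ha k l fun p q hp hq _ => h p hp q hq
  exact (hcomm.add ((h k le_rfl l le_rfl).smul hf)).congr <| .of_forall fun ε =>
    (sub_add_cancel _ _).symm

theorem SlowL2.of_PD_smul {c₀ : ℝ} (hc₀ : 0 < c₀) (hf : SlowCoeff S f)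
    (hfc₀ : ∀ᶠ ε in 𝓝[>] 0, ∀ x ∈ Set.Icc (0 : ℝ) 1, ∀ t ∈ S, c₀ ≤ f ε x t)
    (ha : ∀ᶠ ε in 𝓝[>] 0, IsSmooth (a ε)) (hfa : SlowL2 S A fun ε => PD k l (f ε • a ε))
    (h : ∀ p q, p ≤ k → q ≤ l → p + q < k + l → SlowL2 S A fun ε => PD p q (a ε)) :
    SlowL2 S A fun ε => PD k l (a ε) := by
  refine .of_smul hc₀ (f := f) ?_ (ha.mono fun _ h => h.pd k l) hfc₀
  exact (hfa.sub (hf.slowL2_pdCommutator ha k l h)).congr <| .of_forall fun ε =>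
    (sub_sub_cancel _ _).symm

end SlowNets

/-! ### Regularity for nets of beams -/

section BeamNets

variable {E : Type*} [NormedAddCommGroup E] [InnerProductSpace ℝ E]
variable {T c₀ : ℝ} {A : ℝ → ℝ} {c : ℝ → ℝ → ℝ} {b : ℝ → ℝ → ℝ → ℝ} {u v : ℝ → ℝ → ℝ → E}

/-- A net of uniformly coercive beams on `[0, 1] × [0, T]` with stiffness `c` and axial force `b`
of slow scale, where `b` is moreover of logarithmic type, so that the exponential growth in the
energy estimate stays of slow scale. -/
structure IsSlowBeam (T c₀ : ℝ) (c : ℝ → ℝ → ℝ) (b : ℝ → ℝ → ℝ → ℝ) : Prop where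
  time_pos : 0 < T
  coercivity_pos : 0 < c₀
  coercive : ∀ᶠ ε in 𝓝[>] 0, ∀ x ∈ Set.Icc (0 : ℝ) 1, c₀ ≤ c ε x
  stiffness : SlowCoeff (Set.Icc 0 T) fun ε => spatial (c ε)
  force : SlowCoeff (Set.Icc 0 T) b
  force_le_log : ∃ r, SlowScaleNet r ∧ ∀ᶠ ε in 𝓝[>] 0, 1 ≤ r ε ∧
    ∀ x ∈ Set.Icc (0 : ℝ) 1, ∀ t ∈ Set.Icc 0 T, |b ε x t| ≤ Real.log (r ε)

/-- A net of smooth clamped motions `u` whose load `beamOp c b u` and initial position and velocity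
are, with all their derivatives, of growth `A` up to slow scale factors. -/
structure HasSlowBeamData (T : ℝ) (A : ℝ → ℝ) (c : ℝ → ℝ → ℝ) (b : ℝ → ℝ → ℝ → ℝ)
    (u : ℝ → ℝ → ℝ → E) : Prop where
  smooth : ∀ᶠ ε in 𝓝[>] 0, IsSmooth (u ε)
  clamped : ∀ᶠ ε in 𝓝[>] 0, ∀ t ∈ Set.Icc 0 T, IsClampedAt (u ε) t
  load : ∀ k l, SlowL2 (Set.Icc 0 T) A fun ε => PD k l (beamOp (c ε) (b ε) (u ε))
  position : ∀ k, SlowL2 {0} A fun ε => PD k 0 (u ε)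
  velocity : ∀ k, SlowL2 {0} A fun ε => PD k 1 (u ε)

theorem IsSmooth.PD_beamOp {c : ℝ → ℝ} {b : ℝ → ℝ → ℝ} {v : ℝ → ℝ → E}
    (hc : IsSmooth (spatial c)) (hb : IsSmooth b) (hv : IsSmooth v) (k l : ℕ) :
    PD k l (beamOp c b v) = PD k (l + 2) v + PD (k + 2) 0 (spatial c • PD 2 l v)
      + PD k l (b • PD 2 0 v) := by
  have hflux := hc.smul (hv.pd 2 0)
  have hspatial : PD (k + 2) l (spatial c • PD 2 0 v) = PD (k + 2) 0 (spatial c • PD 2 l v) := by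
    have hsplit := hflux.PD_PD (k + 2) 0 0 l
    rw [zero_add, add_zero, PD_zero_spatial_smul, hv.PD_PD 0 l 2 0, zero_add, add_zero] at hsplit
    exact hsplit.symm
  rw [beamOp, ((hv.pd 0 2).add (hflux.pd 2 0)).PD_add (hb.smul (hv.pd 2 0)),
    (hv.pd 0 2).PD_add (hflux.pd 2 0), hv.PD_PD, hflux.PD_PD]
  simp only [zero_add, add_comm 2, hspatial]

theorem IsSmooth.beamOp_PD_zero {c : ℝ → ℝ} {b : ℝ → ℝ → ℝ} {v : ℝ → ℝ → E}
    (hc : IsSmooth (spatial c)) (hb : IsSmooth b) (hv : IsSmooth v) (l : ℕ) :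
    beamOp c b (PD 0 l v) = PD 0 l (beamOp c b v) - pdCommutator 0 l b (PD 2 0 v) := by
  rw [hc.PD_beamOp hb hv, beamOp, pdCommutator, hv.PD_PD, hv.PD_PD, hv.PD_PD]
  simp only [zero_add, add_zero]
  abel

theorem SlowScaleNet.exists_exp_mul_log_le {r : ℝ → ℝ} (hr : SlowScaleNet r)
    (hr1 : ∀ᶠ ε in 𝓝[>] 0, 1 ≤ r ε) (α β : ℝ) :
    ∃ s, SlowScaleNet s ∧ ∀ᶠ ε in 𝓝[>] 0, Real.exp (α + β * Real.log (r ε)) ≤ s ε := by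
  refine ⟨_, (SlowScaleNet.const (Real.exp α)).mul (hr.pow ⌈β⌉₊), hr1.mono fun ε hε => ?_⟩
  rw [Real.exp_add]
  gcongr
  calc Real.exp (β * Real.log (r ε)) ≤ Real.exp (⌈β⌉₊ * Real.log (r ε)) := by
        have hlog := Real.log_nonneg hε
        gcongr
        exact Nat.le_ceil β
    _ = r ε ^ ⌈β⌉₊ := by rw [Real.exp_nat_mul, Real.exp_log (zero_lt_one.trans_le hε)]

namespace IsSlowBeam

theorem exists_initial_beamEnergy_le (hbeam : IsSlowBeam T c₀ c b)
    (hv : ∀ᶠ ε in 𝓝[>] 0, IsSmooth (v ε)) (hcurvature : SlowL2 {0} A fun ε => PD 2 0 (v ε))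
    (hvelocity : SlowL2 {0} A fun ε => PD 0 1 (v ε)) :
    ∃ s, SlowScaleNet s ∧ ∀ᶠ ε in 𝓝[>] 0, beamEnergy (c ε) (v ε) 0 ≤ s ε * A ε := by
  obtain ⟨sκ, hsκ, hcurvature⟩ := hcurvature
  obtain ⟨sν, hsν, hvelocity⟩ := hvelocity
  obtain ⟨sc, hsc, hstiffness⟩ := hbeam.stiffness.bound 0 0
  refine ⟨_, hsν.add (hsc.mul hsκ), ?_⟩
  filter_upwards [hv, hcurvature, hvelocity, hstiffness, hbeam.stiffness.smooth]
    with ε hv hcurvature hvelocity hstiffness hc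
  have hbound (x : ℝ) (hx : x ∈ Set.Icc (0 : ℝ) 1) : |c ε x| ≤ sc ε := by
    simpa only [PD_zero_zero, spatial] using hstiffness x hx 0 ⟨le_rfl, hbeam.time_pos.le⟩
  have hsc0 : 0 ≤ sc ε := (abs_nonneg _).trans (hbound 0 ⟨le_rfl, zero_le_one⟩)
  calc beamEnergy (c ε) (v ε) 0
      ≤ spaceNormSq (PD 0 1 (v ε)) 0 + sc ε * spaceNormSq (PD 2 0 (v ε)) 0 :=
        beamEnergy_le_of_le hc (fun x hx => (le_abs_self _).trans (hbound x hx)) hv 0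
    _ ≤ sν ε * A ε + sc ε * (sκ ε * A ε) := by
        gcongr
        exacts [hvelocity.2 0 rfl, hcurvature.2 0 rfl]
    _ = (sν ε + sc ε * sκ ε) * A ε := by ring

theorem exists_beamEnergy_le (hbeam : IsSlowBeam T c₀ c b) (hv : ∀ᶠ ε in 𝓝[>] 0, IsSmooth (v ε))
    (hclamped : ∀ᶠ ε in 𝓝[>] 0, ∀ t ∈ Set.Icc 0 T, IsClampedAt (v ε) t)
    (hload : SlowL2 (Set.Icc 0 T) A fun ε => beamOp (c ε) (b ε) (v ε))
    (hcurvature : SlowL2 {0} A fun ε => PD 2 0 (v ε))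
    (hvelocity : SlowL2 {0} A fun ε => PD 0 1 (v ε)) :
    ∃ s, SlowScaleNet s ∧
      ∀ᶠ ε in 𝓝[>] 0, ∀ t ∈ Set.Icc 0 T, beamEnergy (c ε) (v ε) t ≤ s ε * A ε := by
  obtain ⟨r, hr, hlog⟩ := hbeam.force_le_log
  obtain ⟨sl, hsl, hload⟩ := hload
  obtain ⟨si, hsi, hinit⟩ := hbeam.exists_initial_beamEnergy_le hv hcurvature hvelocity
  obtain ⟨se, hse, hexp⟩ := hr.exists_exp_mul_log_le (hlog.mono fun _ h => h.1) T
    ((1 + c₀⁻¹) * T)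
  refine ⟨_, (hsi.add hsl).mul hse, ?_⟩
  filter_upwards [hv, hclamped, hload, hinit, hexp, hlog, hbeam.coercive, hbeam.stiffness.smooth,
    hbeam.force.smooth] with ε hv hclamped hload hinit hexp hlog hcoercive hc hb t ht
  have henergy0 : 0 ≤ beamEnergy (c ε) (v ε) 0 :=
    beamEnergy_nonneg (fun x hx => hbeam.coercivity_pos.le.trans (hcoercive x hx)) _ _
  have hload0 : 0 ≤ sl ε * A ε := (spaceNormSq_nonneg _ _).trans (hload.2 t ht)
  have hexponent : (1 + Real.log (r ε) + Real.log (r ε) / c₀) * T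
      = T + (1 + c₀⁻¹) * T * Real.log (r ε) := by ring
  calc beamEnergy (c ε) (v ε) t
      ≤ (beamEnergy (c ε) (v ε) 0 + sl ε * A ε) *
          Real.exp ((1 + Real.log (r ε) + Real.log (r ε) / c₀) * T) :=
        beamEnergy_le hbeam.time_pos hbeam.coercivity_pos hc hcoercive hb hlog.2 hv hclamped
          hload.2 ht
    _ ≤ (si ε * A ε + sl ε * A ε) * se ε := by
        rw [hexponent]
        gcongr
        linarith
    _ = (si ε + sl ε) * se ε * A ε := by ring

theorem slowL2_of_beamOp (hbeam : IsSlowBeam T c₀ c b) (hv : ∀ᶠ ε in 𝓝[>] 0, IsSmooth (v ε))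
    (hclamped : ∀ᶠ ε in 𝓝[>] 0, ∀ t ∈ Set.Icc 0 T, IsClampedAt (v ε) t)
    (hload : SlowL2 (Set.Icc 0 T) A fun ε => beamOp (c ε) (b ε) (v ε))
    (hcurvature : SlowL2 {0} A fun ε => PD 2 0 (v ε))
    (hvelocity : SlowL2 {0} A fun ε => PD 0 1 (v ε)) :
    (SlowL2 (Set.Icc 0 T) A fun ε => PD 2 0 (v ε)) ∧
      SlowL2 (Set.Icc 0 T) A fun ε => PD 0 1 (v ε) := by
  have hc₀ := hbeam.coercivity_pos
  obtain ⟨s, hs, henergy⟩ := hbeam.exists_beamEnergy_le hv hclamped hload hcurvature hvelocity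
  refine ⟨⟨_, (SlowScaleNet.const c₀⁻¹).mul hs, ?_⟩, ⟨s, hs, ?_⟩⟩
  · filter_upwards [hv, henergy, hbeam.coercive, hbeam.stiffness.smooth]
      with ε hv henergy hcoercive hc
    refine ⟨hv.pd 2 0, fun t ht => ?_⟩
    rw [mul_assoc, ← div_eq_inv_mul, le_div_iff₀' hc₀]
    exact (mul_spaceNormSq_PD_two_zero_le_beamEnergy hc hcoercive hv t).trans (henergy t ht)
  · filter_upwards [hv, henergy, hbeam.coercive, hbeam.stiffness.smooth]
      with ε hv henergy hcoercive hc
    exact ⟨hv.pd 0 1, fun t ht => (spaceNormSq_PD_zero_one_le_beamEnergy hc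
      (fun x hx => hc₀.le.trans (hcoercive x hx)) hv t).trans (henergy t ht)⟩

end IsSlowBeam

namespace HasSlowBeamData

theorem slowL2_initial (hu : HasSlowBeamData T A c b u) (hbeam : IsSlowBeam T c₀ c b) (k l : ℕ) :
    SlowL2 {0} A fun ε => PD k l (u ε) := by
  have h0 : {0} ⊆ Set.Icc 0 T := Set.singleton_subset_iff.2 ⟨le_rfl, hbeam.time_pos.le⟩
  induction l using Nat.strong_induction_on generalizing k with
  | _ l ih =>
    match l with
    | 0 => exact hu.position k
    | 1 => exact hu.velocity k
    | l + 2 =>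
      have hbending : SlowL2 {0} A fun ε => PD (k + 2) 0 (spatial (c ε) • PD 2 l (u ε)) :=
        (hbeam.stiffness.mono h0).slowL2_PD_smul _ _ fun p _ q hq =>
          (slowL2_PD_PD_iff hu.smooth p q 2 l).2 (ih (l + q) (by omega) (2 + p))
      have hforce : SlowL2 {0} A fun ε => PD k l (b ε • PD 2 0 (u ε)) :=
        (hbeam.force.mono h0).slowL2_PD_smul _ _ fun p _ q hq =>
          (slowL2_PD_PD_iff hu.smooth p q 2 0).2 (ih (0 + q) (by omega) (2 + p))
      refine (((hu.load k l).mono h0).sub (hbending.add hforce)).congr ?_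
      filter_upwards [hu.smooth, hbeam.stiffness.smooth, hbeam.force.smooth] with ε hu hc hb
      rw [hc.PD_beamOp hb hu]
      abel

theorem slowL2_energy (hu : HasSlowBeamData T A c b u) (hbeam : IsSlowBeam T c₀ c b) (l : ℕ) :
    (SlowL2 (Set.Icc 0 T) A fun ε => PD 2 l (u ε)) ∧
      SlowL2 (Set.Icc 0 T) A fun ε => PD 0 (l + 1) (u ε) := by
  induction l using Nat.strong_induction_on with
  | _ l ih =>
    have hcurvature (S : Set ℝ) : SlowL2 S A (fun ε => PD 2 0 (PD 0 l (u ε)))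
        ↔ SlowL2 S A fun ε => PD 2 l (u ε) := slowL2_PD_PD_iff hu.smooth 2 0 0 l
    have hvelocity (S : Set ℝ) : SlowL2 S A (fun ε => PD 0 1 (PD 0 l (u ε)))
        ↔ SlowL2 S A fun ε => PD 0 (l + 1) (u ε) := slowL2_PD_PD_iff hu.smooth 0 1 0 l
    rw [← hcurvature, ← hvelocity]
    refine hbeam.slowL2_of_beamOp (hu.smooth.mono fun _ h => h.pd 0 l) ?_ ?_
      ((hcurvature _).2 (hu.slowL2_initial hbeam 2 l))
      ((hvelocity _).2 (hu.slowL2_initial hbeam 0 (l + 1)))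
    · filter_upwards [hu.smooth, hu.clamped] with ε hsmooth hclamped
      exact hsmooth.isClampedAt_pd hbeam.time_pos hclamped l
    · have hcommutator := hbeam.force.slowL2_pdCommutator (A := A)
        (hu.smooth.mono fun _ h => h.pd 2 0) 0 l fun p q hp _ hpq =>
          (slowL2_PD_PD_iff hu.smooth p q 2 0).2 <| by
            simpa only [Nat.le_zero.1 hp, zero_add] using (ih q (by omega)).1
      refine ((hu.load 0 l).sub hcommutator).congr ?_
      filter_upwards [hu.smooth, hbeam.stiffness.smooth, hbeam.force.smooth] with ε hu hc hb
      exact hc.beamOp_PD_zero hb hu l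

theorem slowL2_PD_bending (hu : HasSlowBeamData T A c b u) (hbeam : IsSlowBeam T c₀ c b) {k : ℕ}
    (h : ∀ p ≤ k + 2, p = k ∨ 2 ≤ p → ∀ l, SlowL2 (Set.Icc 0 T) A fun ε => PD p l (u ε)) (l : ℕ) :
    SlowL2 (Set.Icc 0 T) A fun ε => PD (k + 2) 0 (spatial (c ε) • PD 2 l (u ε)) := by
  have hforce : SlowL2 (Set.Icc 0 T) A fun ε => PD k l (b ε • PD 2 0 (u ε)) :=
    hbeam.force.slowL2_PD_smul _ _ fun p hp q _ =>
      (slowL2_PD_PD_iff hu.smooth p q 2 0).2 (h (2 + p) (by omega) (by omega) (0 + q))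
  refine ((hu.load k l).sub ((h k (by omega) (.inl rfl) (l + 2)).add hforce)).congr ?_
  filter_upwards [hu.smooth, hbeam.stiffness.smooth, hbeam.force.smooth] with ε hu hc hb
  rw [hc.PD_beamOp hb hu]
  abel

theorem slowL2_PD_of_bending (hu : HasSlowBeamData T A c b u) (hbeam : IsSlowBeam T c₀ c b)
    {k l : ℕ}
    (hbending : SlowL2 (Set.Icc 0 T) A fun ε => PD k 0 (spatial (c ε) • PD 2 l (u ε)))
    (h : ∀ p < k, SlowL2 (Set.Icc 0 T) A fun ε => PD (2 + p) l (u ε)) :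
    SlowL2 (Set.Icc 0 T) A fun ε => PD (2 + k) l (u ε) :=
  (slowL2_PD_PD_iff hu.smooth k 0 2 l).1 <|
    .of_PD_smul hbeam.coercivity_pos hbeam.stiffness
      (hbeam.coercive.mono fun _ h x hx _ _ => h x hx) (hu.smooth.mono fun _ h => h.pd 2 l) hbending
      fun p q _ hq hpq => (slowL2_PD_PD_iff hu.smooth p q 2 l).2 <| by
        simpa only [Nat.le_zero.1 hq, add_zero] using h p (by omega)

variable [CompleteSpace E]

theorem slowL2_PD_one (hu : HasSlowBeamData T A c b u) (hbeam : IsSlowBeam T c₀ c b) (l : ℕ) :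
    SlowL2 (Set.Icc 0 T) A fun ε => PD 1 l (u ε) := by
  refine .of_PD_one_zero ?_ (hu.smooth.mono fun _ h => h.pd 1 l) ?_
  · simpa only [PD_one_zero_PD] using (hu.slowL2_energy hbeam l).1
  · filter_upwards [hu.smooth, hu.clamped] with ε hsmooth hclamped t ht
    simpa only [PD_one_zero_PD] using
      (hsmooth.isClampedAt_pd hbeam.time_pos hclamped l t ht).deriv_left

theorem slowL2_PD_zero (hu : HasSlowBeamData T A c b u) (hbeam : IsSlowBeam T c₀ c b) (l : ℕ) :
    SlowL2 (Set.Icc 0 T) A fun ε => PD 0 l (u ε) := by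
  refine .of_PD_one_zero ?_ (hu.smooth.mono fun _ h => h.pd 0 l) ?_
  · simpa only [PD_one_zero_PD] using hu.slowL2_PD_one hbeam l
  · filter_upwards [hu.smooth, hu.clamped] with ε hsmooth hclamped t ht
    exact (hsmooth.isClampedAt_pd hbeam.time_pos hclamped l t ht).left

theorem slowL2_PD_three (hu : HasSlowBeamData T A c b u) (hbeam : IsSlowBeam T c₀ c b) (l : ℕ) :
    SlowL2 (Set.Icc 0 T) A fun ε => PD 3 l (u ε) := by
  have hcurvature (l : ℕ) := (hu.slowL2_energy hbeam l).1
  have hbending : SlowL2 (Set.Icc 0 T) A fun ε => PD 2 0 (spatial (c ε) • PD 2 l (u ε)) :=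
    hu.slowL2_PD_bending hbeam (k := 0) (fun p hp hp' => by
      obtain rfl | rfl : p = 0 ∨ p = 2 := by omega
      exacts [hu.slowL2_PD_zero hbeam, hcurvature]) l
  refine hu.slowL2_PD_of_bending hbeam (k := 1)
    (((hcurvature l).smul hbeam.stiffness).PD_one_zero hbending) fun p hp => ?_
  rw [Nat.lt_one_iff.1 hp]
  exact hcurvature l

theorem slowL2_PD (hu : HasSlowBeamData T A c b u) (hbeam : IsSlowBeam T c₀ c b) (k l : ℕ) :
    SlowL2 (Set.Icc 0 T) A fun ε => PD k l (u ε) := by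
  induction k using Nat.strong_induction_on generalizing l with
  | _ k ih =>
    match k with
    | 0 => exact hu.slowL2_PD_zero hbeam l
    | 1 => exact hu.slowL2_PD_one hbeam l
    | 2 => exact (hu.slowL2_energy hbeam l).1
    | 3 => exact hu.slowL2_PD_three hbeam l
    | k + 4 =>
      have hbending := hu.slowL2_PD_bending hbeam (k := k) (fun p hp _ => ih p (by omega)) l
      simpa only [add_comm 2, add_assoc] using
        hu.slowL2_PD_of_bending hbeam hbending fun p hp => ih (2 + p) (by omega) l

end HasSlowBeamData

end BeamNets

/-! ### From space-time bounds on the data to bounds on the solution -/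

section SpaceTimeNorm

variable {F : Type*} [NormedAddCommGroup F] {v w : ℝ → ℝ → F} {T : ℝ}

/-- The square of the norm of `v` in `L²((0, 1) × (0, T))`. -/
def spaceTimeNormSq (T : ℝ) (v : ℝ → ℝ → F) : ℝ :=
  ∫ t in Set.Ioc 0 T, ∫ x in Set.Ioo (0 : ℝ) 1, ‖v x t‖ ^ 2

theorem spaceTimeNormSq_nonneg (T : ℝ) (v : ℝ → ℝ → F) : 0 ≤ spaceTimeNormSq T v :=
  integral_nonneg fun _ => integral_nonneg fun _ => sq_nonneg _

theorem setIntegral_norm_sq_eq_spaceNormSq (v : ℝ → ℝ → F) (t : ℝ) :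
    ∫ x in Set.Ioo (0 : ℝ) 1, ‖v x t‖ ^ 2 = spaceNormSq v t := by
  rw [spaceNormSq, intervalIntegral.integral_of_le zero_le_one, integral_Ioc_eq_integral_Ioo]

theorem spaceTimeNormSq_eq_integral (hT : 0 ≤ T) (v : ℝ → ℝ → F) :
    spaceTimeNormSq T v = ∫ t in (0 : ℝ)..T, spaceNormSq v t := by
  simp only [spaceTimeNormSq, setIntegral_norm_sq_eq_spaceNormSq,
    intervalIntegral.integral_of_le hT]

theorem spaceTimeNormSq_congr
    (h : ∀ x ∈ Set.Ioo (0 : ℝ) 1, ∀ t ∈ Set.Ioo 0 T, v x t = w x t) :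
    spaceTimeNormSq T v = spaceTimeNormSq T w := by
  simp only [spaceTimeNormSq, integral_Ioc_eq_integral_Ioo]
  refine setIntegral_congr_fun measurableSet_Ioo fun t ht =>
    setIntegral_congr_fun measurableSet_Ioo fun x hx => ?_
  simp only [h x hx t ht]

theorem spaceTimeNormSq_le {K : ℝ} (hT : 0 ≤ T) (h : ∀ t ∈ Set.Icc 0 T, spaceNormSq v t ≤ K) :
    spaceTimeNormSq T v ≤ K * T := by
  rw [spaceTimeNormSq_eq_integral hT]
  have hnorm := intervalIntegral.norm_integral_le_of_norm_le_const (a := 0) (b := T) (C := K)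
    (f := spaceNormSq v) fun t ht => by
      rw [Real.norm_of_nonneg (spaceNormSq_nonneg v t)]
      exact h t (Set.Ioc_subset_Icc_self (Set.uIoc_of_le hT ▸ ht))
  rw [sub_zero, abs_of_nonneg hT] at hnorm
  exact (le_abs_self _).trans hnorm

end SpaceTimeNorm

section Reduction

variable {E : Type*} [NormedAddCommGroup E] [InnerProductSpace ℝ E]
variable {T c₀ : ℝ} {A : ℝ → ℝ} {c : ℝ → ℝ → ℝ} {b : ℝ → ℝ → ℝ → ℝ}
variable {f₁ f₂ φ : ℝ → ℝ → E} {g u v : ℝ → ℝ → ℝ → E}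

/-- A smooth solution of the clamped Euler–Bernoulli problem; the data `f₁`, `f₂` and `g` are
prescribed only on the open interval and the open rectangle. -/
structure IsBeamSolution (T : ℝ) (c : ℝ → ℝ) (b : ℝ → ℝ → ℝ) (f₁ f₂ : ℝ → E) (g u : ℝ → ℝ → E) :
    Prop where
  smooth : IsSmooth u
  equation : ∀ x ∈ Set.Ioo (0 : ℝ) 1, ∀ t ∈ Set.Ioo 0 T, beamOp c b u x t = g x t
  position : ∀ x ∈ Set.Ioo (0 : ℝ) 1, u x 0 = f₁ x
  velocity : ∀ x ∈ Set.Ioo (0 : ℝ) 1, PD 0 1 u x 0 = f₂ x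
  clamped : ∀ t ∈ Set.Icc 0 T, IsClampedAt u t

theorem slowL2_singleton_zero_of_isBigO (hv : ∀ᶠ ε in 𝓝[>] 0, IsSmooth (v ε))
    (hvφ : ∀ᶠ ε in 𝓝[>] 0, ∀ x ∈ Set.Ioo (0 : ℝ) 1, v ε x 0 = φ ε x) {k : ℕ}
    (hφ : (fun ε => ∫ x in Set.Ioo (0 : ℝ) 1, ‖iteratedDeriv k (φ ε) x‖ ^ 2) =O[𝓝[>] 0] A) :
    SlowL2 {0} (fun ε => ‖A ε‖) fun ε => PD k 0 (v ε) := by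
  obtain ⟨C, hC⟩ := hφ.bound
  refine ⟨_, SlowScaleNet.const C, ?_⟩
  filter_upwards [hv, hvφ, hC] with ε hv hvφ hC
  refine ⟨hv.pd k 0, fun t ht => ?_⟩
  rw [Set.mem_singleton_iff.1 ht, ← setIntegral_norm_sq_eq_spaceNormSq]
  refine le_of_eq_of_le ?_ ((le_abs_self _).trans hC)
  refine setIntegral_congr_fun measurableSet_Ioo fun x hx => ?_
  have hderiv : PD k 0 (v ε) x 0 = iteratedDeriv k (φ ε) x := by
    simpa only [PD, iteratedDeriv_zero] using iteratedDeriv_eqOn_of_isOpen isOpen_Ioo hvφ k hx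
  simp only [hderiv]

theorem slowL2_Icc_of_isBigO (hT : 0 < T) (hv : ∀ᶠ ε in 𝓝[>] 0, IsSmooth (v ε))
    (hbound : (fun ε => spaceTimeNormSq T (v ε)) =O[𝓝[>] 0] A)
    (hderiv : (fun ε => spaceTimeNormSq T (PD 0 1 (v ε))) =O[𝓝[>] 0] A) :
    SlowL2 (Set.Icc 0 T) (fun ε => ‖A ε‖) v := by
  obtain ⟨C, hC⟩ := hbound.bound
  obtain ⟨C', hC'⟩ := hderiv.bound
  refine ⟨_, SlowScaleNet.const (((1 + T) * C + T * C') / T), ?_⟩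
  filter_upwards [hv, hC, hC'] with ε hv hC hC'
  refine ⟨hv, fun t ht => ?_⟩
  rw [Real.norm_of_nonneg (spaceTimeNormSq_nonneg _ _), spaceTimeNormSq_eq_integral hT.le] at hC hC'
  rw [div_mul_eq_mul_div, le_div_iff₀' hT]
  calc T * spaceNormSq (v ε) t
      ≤ (1 + T) * (∫ s in (0 : ℝ)..T, spaceNormSq (v ε) s)
          + T * ∫ s in (0 : ℝ)..T, spaceNormSq (PD 0 1 (v ε)) s := hv.mul_spaceNormSq_le_integral ht
    _ ≤ (1 + T) * (C * ‖A ε‖) + T * (C' * ‖A ε‖) := by gcongr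
    _ = ((1 + T) * C + T * C') * ‖A ε‖ := by ring

theorem SlowL2.isBigO_spaceTimeNormSq (hT : 0 ≤ T)
    (hv : SlowL2 (Set.Icc 0 T) (fun ε => ‖A ε‖) v) :
    (fun ε => spaceTimeNormSq T (v ε)) =O[𝓝[>] 0] fun ε => ε⁻¹ * A ε := by
  obtain ⟨s, hs, hbound⟩ := hv
  have hle : (fun ε => spaceTimeNormSq T (v ε)) =O[𝓝[>] 0] fun ε => s ε * A ε := by
    refine .of_bound T (hbound.mono fun ε h => ?_)
    rw [Real.norm_of_nonneg (spaceTimeNormSq_nonneg _ _), norm_mul, mul_comm]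
    refine (spaceTimeNormSq_le hT h.2).trans ?_
    gcongr
    exact le_abs_self _
  have hslow : s =O[𝓝[>] 0] fun ε => ε⁻¹ := by
    simpa only [pow_one, isBigO_abs_left] using hs 1
  exact hle.trans (hslow.mul (isBigO_refl A _))

theorem hasSlowBeamData_of_isBigO (hbeam : IsSlowBeam T c₀ c b)
    (hu : ∀ᶠ ε in 𝓝[>] 0, IsBeamSolution T (c ε) (b ε) (f₁ ε) (f₂ ε) (g ε) (u ε))
    (hf₁ : ∀ k, (fun ε => ∫ x in Set.Ioo (0 : ℝ) 1, ‖iteratedDeriv k (f₁ ε) x‖ ^ 2)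
      =O[𝓝[>] 0] A)
    (hf₂ : ∀ k, (fun ε => ∫ x in Set.Ioo (0 : ℝ) 1, ‖iteratedDeriv k (f₂ ε) x‖ ^ 2)
      =O[𝓝[>] 0] A)
    (hg : ∀ k l, (fun ε => spaceTimeNormSq T (PD k l (g ε))) =O[𝓝[>] 0] A) :
    HasSlowBeamData T (fun ε => ‖A ε‖) c b u := by
  have hsmooth : ∀ᶠ ε in 𝓝[>] 0, IsSmooth (u ε) := hu.mono fun _ h => h.smooth
  have hload : ∀ᶠ ε in 𝓝[>] 0, IsSmooth (beamOp (c ε) (b ε) (u ε)) := by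
    filter_upwards [hsmooth, hbeam.stiffness.smooth, hbeam.force.smooth] with ε hu hc hb
    exact isSmooth_beamOp hc hb hu
  have hloadBound (k l : ℕ) :
      (fun ε => spaceTimeNormSq T (PD k l (beamOp (c ε) (b ε) (u ε)))) =O[𝓝[>] 0] A :=
    (hg k l).congr' (hu.mono fun ε h => (spaceTimeNormSq_congr
      (PD_eq_of_isOpen isOpen_Ioo isOpen_Ioo h.equation k l)).symm) .rfl
  refine ⟨hsmooth, hu.mono fun _ h => h.clamped, fun k l => ?_, fun k => ?_, fun k => ?_⟩
  · refine slowL2_Icc_of_isBigO hbeam.time_pos (hload.mono fun _ h => h.pd k l) (hloadBound k l) ?_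
    exact (hloadBound k (l + 1)).congr' (hload.mono fun ε h => by
      simp only [h.PD_zero_one_PD]) .rfl
  · exact slowL2_singleton_zero_of_isBigO hsmooth (hu.mono fun _ h => h.position) (hf₁ k)
  · simpa only [PD_PD_zero_one] using slowL2_singleton_zero_of_isBigO
      (hsmooth.mono fun _ h => h.pd 0 1) (hu.mono fun _ h => h.velocity) (hf₂ k)

theorem beam_generalized_regularity_general [CompleteSpace E] (hbeam : IsSlowBeam T c₀ c b)
    (hu : ∀ᶠ ε in 𝓝[>] 0, IsBeamSolution T (c ε) (b ε) (f₁ ε) (f₂ ε) (g ε) (u ε))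
    (hdata : ∀ l k, (fun ε => (∫ x in Set.Ioo (0 : ℝ) 1, ‖iteratedDeriv k (f₁ ε) x‖ ^ 2)
      + (∫ x in Set.Ioo (0 : ℝ) 1, ‖iteratedDeriv k (f₂ ε) x‖ ^ 2)
      + spaceTimeNormSq T (PD k l (g ε))) =O[𝓝[>] 0] A) (l k : ℕ) :
    (fun ε => spaceTimeNormSq T (PD k l (u ε))) =O[𝓝[>] 0] fun ε => ε⁻¹ * A ε := by
  have hf₁ (k : ℕ) (ε : ℝ) : 0 ≤ ∫ x in Set.Ioo (0 : ℝ) 1, ‖iteratedDeriv k (f₁ ε) x‖ ^ 2 :=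
    integral_nonneg fun _ => sq_nonneg _
  have hf₂ (k : ℕ) (ε : ℝ) : 0 ≤ ∫ x in Set.Ioo (0 : ℝ) 1, ‖iteratedDeriv k (f₂ ε) x‖ ^ 2 :=
    integral_nonneg fun _ => sq_nonneg _
  have hg (k l : ℕ) (ε : ℝ) := spaceTimeNormSq_nonneg T (PD k l (g ε))
  have hslow : HasSlowBeamData T (fun ε => ‖A ε‖) c b u := by
    refine hasSlowBeamData_of_isBigO hbeam hu
      (fun k => .trans (.of_norm_le fun ε => ?_) (hdata 0 k))
      (fun k => .trans (.of_norm_le fun ε => ?_) (hdata 0 k))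
      fun k l => .trans (.of_norm_le fun ε => ?_) (hdata l k)
    · rw [Real.norm_of_nonneg (hf₁ k ε)]
      linarith [hf₂ k ε, hg k 0 ε]
    · rw [Real.norm_of_nonneg (hf₂ k ε)]
      linarith [hf₁ k ε, hg k 0 ε]
    · rw [Real.norm_of_nonneg (hg k l ε)]
      linarith [hf₁ k ε, hf₂ k ε]
  exact (hslow.slowL2_PD hbeam k l).isBigO_spaceTimeNormSq hbeam.time_pos.le

end Reduction

/-! ### Nets of classical solutions -/

section ClassicalSolutions

variable {T c₀ : ℝ} {I : ℝ → ℝ}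

theorem eventually_nhdsGT_zero_iff {p : ℝ → Prop} :
    (∀ᶠ ε in 𝓝[>] (0 : ℝ), p ε) ↔ ∃ ε₀ ∈ Set.Ioc (0 : ℝ) 1, ∀ ε ∈ Set.Ioc 0 ε₀, p ε := by
  constructor
  · intro h
    obtain ⟨ε₀, hε₀, hp⟩ := mem_nhdsGT_iff_exists_Ioc_subset.1 h
    exact ⟨min ε₀ 1, ⟨lt_min hε₀ one_pos, min_le_right _ _⟩,
      fun ε hε => hp ⟨hε.1, hε.2.trans (min_le_left _ _)⟩⟩
  · rintro ⟨ε₀, hε₀, hp⟩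
    exact eventually_of_mem (Ioc_mem_nhdsGT hε₀.1) hp

theorem isBigO_inv_pow_iff (hI : ∀ ε, 0 ≤ I ε) (n : ℕ) :
    I =O[𝓝[>] 0] (fun ε => (ε ^ n)⁻¹) ↔
      ∃ C, 0 < C ∧ ∃ ε₀ ∈ Set.Ioc (0 : ℝ) 1, ∀ ε ∈ Set.Ioc 0 ε₀, I ε ≤ C / ε ^ n := by
  simp only [isBigO_iff', ← eventually_nhdsGT_zero_iff]
  refine exists_congr fun C => and_congr_right fun _ => eventually_congr ?_
  filter_upwards [self_mem_nhdsWithin] with ε (hε : 0 < ε)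
  rw [Real.norm_of_nonneg (hI ε), Real.norm_of_nonneg (by positivity), div_eq_mul_inv]

theorem isBigO_sqrt_inv_pow {n : ℕ} (h : I =O[𝓝[>] 0] fun ε => (ε ^ n)⁻¹) :
    (fun ε => √(I ε)) =O[𝓝[>] 0] fun ε => (ε ^ n)⁻¹ := by
  have hone : (fun _ => (1 : ℝ)) =O[𝓝[>] 0] fun ε : ℝ => (ε ^ n)⁻¹ := by
    refine .of_bound' ?_
    filter_upwards [Ioc_mem_nhdsGT one_pos] with ε hε
    rw [norm_one, norm_inv, norm_pow, Real.norm_of_nonneg hε.1.le]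
    exact one_le_inv_iff₀.2 ⟨pow_pos hε.1 n, pow_le_one₀ hε.1.le hε.2⟩
  refine (IsBigO.of_norm_le fun ε => ?_).trans (hone.add h.norm_left)
  rw [Real.norm_of_nonneg (Real.sqrt_nonneg _), Real.sqrt_le_left (by positivity)]
  nlinarith [Real.le_norm_self (I ε), norm_nonneg (I ε)]

theorem slowCoeff_spatial {S : Set ℝ} {c : ℝ → ℝ → ℝ}
    (hc : ∀ᶠ ε in 𝓝[>] 0, ContDiff ℝ (⊤ : ℕ∞) (c ε))
    (hbound : ∀ k, ∃ s, SlowScaleNet s ∧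
      ∀ᶠ ε in 𝓝[>] 0, ∀ x ∈ Set.Icc (0 : ℝ) 1, |iteratedDeriv k (c ε) x| ≤ s ε) :
    SlowCoeff S fun ε => spatial (c ε) where
  smooth := hc.mono fun _ => isSmooth_spatial
  bound
    | k, 0 => by
      obtain ⟨s, hs, hbound⟩ := hbound k
      refine ⟨s, hs, hbound.mono fun ε hε x hx t _ => ?_⟩
      simpa only [PD_zero_spatial] using hε x hx
    | k, l + 1 => ⟨_, .const 0, .of_forall fun ε x _ t _ => by simp [PD_succ_spatial]⟩

theorem isSlowBeam_of_forall_mem_Ioc {c : ℝ → ℝ → ℝ} {b : ℝ → ℝ → ℝ → ℝ} {r : ℝ → ℝ}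
    (hT : 0 < T) (hc₀ : 0 < c₀)
    (hc : ∀ ε ∈ Set.Ioc (0 : ℝ) 1, ContDiff ℝ (⊤ : ℕ∞) (c ε) ∧
      ∀ x ∈ Set.Icc (0 : ℝ) 1, c₀ ≤ c ε x)
    (hcss : ∀ k, ∃ s, SlowScaleNet s ∧ ∀ ε ∈ Set.Ioc (0 : ℝ) 1,
      ∀ x ∈ Set.Icc (0 : ℝ) 1, |iteratedDeriv k (c ε) x| ≤ s ε)
    (hb : ∀ ε ∈ Set.Ioc (0 : ℝ) 1, IsSmooth (b ε))
    (hbss : ∀ l k, ∃ s, SlowScaleNet s ∧ ∀ ε ∈ Set.Ioc (0 : ℝ) 1,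
      ∀ x ∈ Set.Icc (0 : ℝ) 1, ∀ t ∈ Set.Icc 0 T, |PD k l (b ε) x t| ≤ s ε)
    (hr : SlowScaleNet r) (hr1 : ∀ ε ∈ Set.Ioc (0 : ℝ) 1, 1 ≤ r ε)
    (hblog : ∃ ε₀ ∈ Set.Ioc (0 : ℝ) 1, ∀ ε ∈ Set.Ioc 0 ε₀,
      ∀ x ∈ Set.Icc (0 : ℝ) 1, ∀ t ∈ Set.Icc 0 T, |b ε x t| ≤ Real.log (r ε)) :
    IsSlowBeam T c₀ c b := by
  have hε : ∀ᶠ ε in 𝓝[>] (0 : ℝ), ε ∈ Set.Ioc (0 : ℝ) 1 := Ioc_mem_nhdsGT one_pos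
  exact {
    time_pos := hT
    coercivity_pos := hc₀
    coercive := hε.mono fun ε hε => (hc ε hε).2
    stiffness := slowCoeff_spatial (hε.mono fun ε hε => (hc ε hε).1) fun k =>
      (hcss k).imp fun s hs => ⟨hs.1, hε.mono hs.2⟩
    force := ⟨hε.mono hb, fun k l => (hbss l k).imp fun s hs => ⟨hs.1, hε.mono hs.2⟩⟩
    force_le_log := ⟨r, hr, (hε.mono hr1).and (eventually_nhdsGT_zero_iff.2 hblog)⟩ }

theorem Dx_eq_PD (v : ℝ → ℝ → ℂ) : Dx v = PD 1 0 v :=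
  funext₂ fun x t => (PD_one_zero_apply v x t).symm

theorem Dt_eq_PD (v : ℝ → ℝ → ℂ) : Dt v = PD 0 1 v :=
  funext₂ fun x t => (PD_zero_one_apply v x t).symm

theorem IsClassicalSol.isBeamSolution {c : ℝ → ℝ} {b : ℝ → ℝ → ℝ} {f₁ f₂ : ℝ → ℂ}
    {g u : ℝ → ℝ → ℂ} (h : IsClassicalSol T c b f₁ f₂ g u) :
    IsBeamSolution T c b f₁ f₂ g u := by
  obtain ⟨hsmooth, hequation, hinitial, hclamped⟩ := h
  simp only [Dx_eq_PD, Dt_eq_PD, PD_one_zero_PD, PD_PD_zero_one, ← Complex.real_smul]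
    at hequation hinitial hclamped
  exact {
    smooth := hsmooth
    equation := fun x hx t ht =>
      hequation x (Set.Ioo_subset_Icc_self hx) t (Set.Ioo_subset_Icc_self ht)
    position := fun x hx => (hinitial x (Set.Ioo_subset_Icc_self hx)).1
    velocity := fun x hx => (hinitial x (Set.Ioo_subset_Icc_self hx)).2
    clamped := fun t ht =>
      have ⟨left, right, deriv_left, deriv_right⟩ := hclamped t ht
      ⟨left, right, deriv_left, deriv_right⟩ }

end ClassicalSolutions

/- STATEMENT 12: generalized regularity.  If the smooth coefficients are of slow
   scale in all derivatives, `b_ε` is of slow scale `L^∞`-log-type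
   (`‖b_ε‖_{L^∞} ≤ log r_ε` with `(r_ε)` slow scale, `r_ε ≥ 1`), and the smooth data
   satisfy the `G^∞`-type estimate with a uniform exponent `M₀` (all squared `L²`
   norms of all derivatives are `O(ε^{-M₀})`), then the smooth solutions `u_ε`
   satisfy the uniform moderateness estimate
   `‖∂ₜˡ∂ₓᵏu_ε‖_{L²(X_T)} = O(ε^{-M₀-1})` for all `l,k`. -/

theorem beam_generalized_regularity (T c₀ c₁ : ℝ) (M₀ : ℕ)
    (hT : 0 < T) (hc₀ : 0 < c₀) (hcc : c₀ < c₁)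
    (c : ℝ → ℝ → ℝ) (b : ℝ → ℝ → ℝ → ℝ) (f₁ f₂ : ℝ → ℝ → ℂ) (g : ℝ → ℝ → ℝ → ℂ)
    (r : ℝ → ℝ)
    -- the coefficient `c_ε`: smooth, bounded between `c₀` and `c₁`, slow scale in all derivatives
    (hc : ∀ ε ∈ Set.Ioc (0:ℝ) 1, ContDiff ℝ (⊤ : ℕ∞) (c ε) ∧
      ∀ x ∈ Set.Icc (0:ℝ) 1, c₀ ≤ c ε x ∧ c ε x ≤ c₁)
    (hcss : ∀ k : ℕ, ∃ s : ℝ → ℝ, SlowScaleNet s ∧ ∀ ε ∈ Set.Ioc (0:ℝ) 1,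
      ∀ x ∈ Set.Icc (0:ℝ) 1, |iteratedDeriv k (c ε) x| ≤ s ε)
    -- the coefficient `b_ε`: smooth, of slow scale `L^∞`-log-type, slow scale in all derivatives
    (hb : ∀ ε ∈ Set.Ioc (0:ℝ) 1, ContDiff ℝ (⊤ : ℕ∞) (Function.uncurry (b ε)))
    (hr : SlowScaleNet r) (hr1 : ∀ ε ∈ Set.Ioc (0:ℝ) 1, 1 ≤ r ε)
    (hblog : ∃ ε₀ ∈ Set.Ioc (0:ℝ) 1, ∀ ε ∈ Set.Ioc (0:ℝ) ε₀,
      ∀ x ∈ Set.Icc (0:ℝ) 1, ∀ t ∈ Set.Icc (0:ℝ) T, |b ε x t| ≤ Real.log (r ε))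
    (hbss : ∀ l k : ℕ, ∃ s : ℝ → ℝ, SlowScaleNet s ∧ ∀ ε ∈ Set.Ioc (0:ℝ) 1,
      ∀ x ∈ Set.Icc (0:ℝ) 1, ∀ t ∈ Set.Icc (0:ℝ) T, |PD k l (b ε) x t| ≤ s ε)
    -- the data `f₁ε, f₂ε ∈ C_c^∞((0,1))`, `g_ε` smooth, with uniform moderateness exponent `M₀`
    (hf : ∀ ε ∈ Set.Ioc (0:ℝ) 1, IsTestFun (f₁ ε) ∧ IsTestFun (f₂ ε))
    (hgsm : ∀ ε ∈ Set.Ioc (0:ℝ) 1, ContDiff ℝ (⊤ : ℕ∞) (Function.uncurry (g ε)))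
    (hdata : ∀ l k : ℕ, ∃ C : ℝ, 0 < C ∧ ∃ ε₀ ∈ Set.Ioc (0:ℝ) 1,
      ∀ ε ∈ Set.Ioc (0:ℝ) ε₀,
        (∫ x in Set.Ioo (0:ℝ) 1, ‖iteratedDeriv k (f₁ ε) x‖ ^ 2)
          + (∫ x in Set.Ioo (0:ℝ) 1, ‖iteratedDeriv k (f₂ ε) x‖ ^ 2)
          + (∫ t in Set.Ioc (0:ℝ) T, ∫ x in Set.Ioo (0:ℝ) 1, ‖PD k l (g ε) x t‖ ^ 2)
        ≤ C / ε ^ M₀)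
    -- the smooth solutions
    (u : ℝ → ℝ → ℝ → ℂ)
    (hu : ∀ ε ∈ Set.Ioc (0:ℝ) 1, IsClassicalSol T (c ε) (b ε) (f₁ ε) (f₂ ε) (g ε) (u ε)) :
    ∀ l k : ℕ, ∃ C : ℝ, 0 < C ∧ ∃ ε₀ ∈ Set.Ioc (0:ℝ) 1,
      ∀ ε ∈ Set.Ioc (0:ℝ) ε₀,
        Real.sqrt (∫ t in Set.Ioc (0:ℝ) T, ∫ x in Set.Ioo (0:ℝ) 1, ‖PD k l (u ε) x t‖ ^ 2)
          ≤ C / ε ^ (M₀ + 1) := by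
  have hbeam : IsSlowBeam T c₀ c b := isSlowBeam_of_forall_mem_Ioc hT hc₀
    (fun ε hε => ⟨(hc ε hε).1, fun x hx => ((hc ε hε).2 x hx).1⟩) hcss hb hbss hr hr1 hblog
  have hsolution := eventually_of_mem (Ioc_mem_nhdsGT one_pos) fun ε hε => (hu ε hε).isBeamSolution
  have hdataBigO (l k : ℕ) := (isBigO_inv_pow_iff (fun ε => by positivity) M₀).2 (hdata l k)
  intro l k
  have hregular := beam_generalized_regularity_general hbeam hsolution hdataBigO l k
  simp only [← mul_inv, ← pow_succ'] at hregular
  exact (isBigO_inv_pow_iff (fun ε => Real.sqrt_nonneg _) _).1 (isBigO_sqrt_inv_pow hregular)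

end
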